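/- arXiv:1006.1372 — 3 statements merged into one kernel-verified Lean document; each statement's English description precedes it below -/
import Mathlib

section
/- Let a = 2π/(ln 2 − γ), where γ is the Euler–Mascheroni constant, let c < 0 and θ₀ ∈ ℝ with θ₀ ≠ 0. Then there exist C > 0 and ε₀ > 0 such that for all 0 < ε < ε₀ the equation {a + cε + (θ₀(a+cε) − ε²)·(Log z/(4π) − i/4 − 1/a)}·{θ₀ + (θ₀(a+cε) − ε²)·(Log(1−z)/(4π) − 1/a)} − ε² = 0, with Log the principal complex logarithm, has a solution E_ε^r with Im(E_ε^r) < 0 satisfying |Re(E_ε^r) − 4π|c|ε/a²| ≤ Cε², and for every δ > 0 there is ε₁ > 0 such that for 0 < ε < ε₁, |Im(E_ε^r) + 16π³ε²/(a²θ₀²·(ln ε)²)| ≤ δ·ε²/(ln ε)². -/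
open Complex

open Filter Topology

/-- A holomorphic map of a disc into a much smaller disc has a fixed point. -/
lemma res_fixed (G : ℂ → ℂ) (hd : DifferentiableOn ℂ G (Metric.ball 0 3))
    (hb : ∀ q ∈ Metric.ball (0 : ℂ) 3, ‖G q‖ ≤ 1 / 4) :
    ∃ q : ℂ, ‖q‖ ≤ 1 ∧ G q = q := by
  have hder : ∀ q ∈ Metric.closedBall (0 : ℂ) 1, ‖deriv G q‖₊ ≤ (1 / 4 : NNReal) := by
    intro q hq
    have hq' : ‖q‖ ≤ 1 := by simpa using hq
    have hsub : Metric.closedBall q 1 ⊆ Metric.ball (0 : ℂ) 3 := by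
      intro y hy
      have h1 : ‖y - q‖ ≤ 1 := by simpa [dist_eq_norm] using hy
      have h2 : ‖y‖ ≤ ‖y - q‖ + ‖q‖ := by simpa using norm_add_le (y - q) q
      simp only [Metric.mem_ball, dist_zero_right]
      linarith
    have hdc : DiffContOnCl ℂ G (Metric.ball q 1) := by
      apply DifferentiableOn.diffContOnCl
      exact hd.mono ((Metric.closure_ball_subset_closedBall).trans hsub)
    have := Complex.norm_deriv_le_of_forall_mem_sphere_norm_le (one_pos) hdc
      (fun z hz => hb z (hsub (Metric.sphere_subset_closedBall hz)))
    rw [← NNReal.coe_le_coe]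
    simpa using this
  have hsub : Metric.closedBall (0 : ℂ) 1 ⊆ Metric.ball (0 : ℂ) 3 :=
    Metric.closedBall_subset_ball (by norm_num)
  have hlip : LipschitzOnWith (1 / 4 : NNReal) G (Metric.closedBall 0 1) := by
    apply Convex.lipschitzOnWith_of_nnnorm_deriv_le (𝕜 := ℂ) _ hder (convex_closedBall _ _)
    intro q hq
    exact hd.differentiableAt (Metric.isOpen_ball.mem_nhds (hsub hq))
  have hmaps : Set.MapsTo G (Metric.closedBall 0 1) (Metric.closedBall 0 1) := by
    intro q hq
    have := hb q (hsub hq)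
    simp only [Metric.mem_closedBall, dist_zero_right]
    linarith
  have hc : ContractingWith (1 / 4 : NNReal) (hmaps.restrict G _ _) := by
    refine ⟨?_, ?_⟩
    · rw [← NNReal.coe_lt_coe]; norm_num
    · exact hlip.mapsToRestrict hmaps
  obtain ⟨y, hy, hfy, -⟩ := ContractingWith.exists_fixedPoint'
    (Metric.isClosed_closedBall.isComplete) hmaps hc (x := 0) (by simp) (edist_ne_top _ _)
  exact ⟨y, by simpa using hy, hfy⟩

noncomputable def rK (a c θ ε : ℝ) : ℝ := θ * (a + c * ε) - ε ^ 2

noncomputable def rP (a c θ ε : ℝ) : ℝ := 4 * Real.pi / (rK a c θ ε * a) * (θ * c - ε)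

noncomputable def rT (a c θ : ℝ) (x : ℝ × ℂ) : ℂ :=
  (rP a c θ x.1 : ℂ) + ((4 * Real.pi / rK a c θ x.1 : ℝ) : ℂ) * ((x.1 : ℂ) * x.2)

noncomputable def rZ (a c θ : ℝ) (x : ℝ × ℂ) : ℂ := 1 - Complex.exp ((x.1 : ℂ) * rT a c θ x)

noncomputable def rF (a c θ : ℝ) (x : ℝ × ℂ) : ℂ :=
  ((a + c * x.1 : ℝ) : ℂ) + (rK a c θ x.1 : ℂ) *
    (Complex.log (rZ a c θ x) / (4 * Real.pi) - Complex.I / 4 - ((1 / a : ℝ) : ℂ))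

noncomputable def rl : Filter (ℝ × ℂ) := 𝓝[>] (0 : ℝ) ×ˢ 𝓟 (Metric.ball (0 : ℂ) 3)

lemma rl_fst : Tendsto (fun x : ℝ × ℂ => x.1) rl (𝓝[>] 0) := tendsto_fst

lemma rl_fst' : Tendsto (fun x : ℝ × ℂ => x.1) rl (𝓝 0) :=
  rl_fst.mono_right nhdsWithin_le_nhds

lemma rl_pos : ∀ᶠ x in rl, 0 < x.1 := rl_fst.eventually self_mem_nhdsWithin

lemma rl_mul : Tendsto (fun x : ℝ × ℂ => (x.1 : ℂ) * x.2) rl (𝓝 0) := by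
  have h1 : Tendsto (fun x : ℝ × ℂ => (x.1 : ℂ)) rl (𝓝 0) := by
    have := (Complex.continuous_ofReal.tendsto 0).comp rl_fst'
    simpa [Function.comp_def] using this
  refine h1.zero_mul_isBoundedUnder_le ?_
  refine ⟨3, ?_⟩
  rw [eventually_map]
  have : ∀ᶠ x in rl, x.2 ∈ Metric.ball (0 : ℂ) 3 :=
    tendsto_snd.eventually (mem_principal_self _)
  filter_upwards [this] with x hx
  have : ‖x.2‖ < 3 := by simpa using hx
  simpa using this.le

lemma rK_tendsto (a c θ : ℝ) : Tendsto (rK a c θ) (𝓝 0) (𝓝 (θ * a)) := by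
  have : Continuous (rK a c θ) := by unfold rK; fun_prop
  simpa [rK] using this.tendsto 0

lemma rP_diff (a c θ : ℝ) (ha : a ≠ 0) (hθ : θ ≠ 0) : DifferentiableAt ℝ (rP a c θ) 0 := by
  unfold rP rK
  have : (θ * (a + c * 0) - 0 ^ 2) * a ≠ 0 := by simp [ha, hθ]
  fun_prop (disch := assumption)

lemma rP_zero (a c θ : ℝ) (ha : a ≠ 0) (hθ : θ ≠ 0) :
    rP a c θ 0 = 4 * Real.pi * c / a ^ 2 := by
  unfold rP rK
  field_simp
  ring

lemma rT_tendsto (a c θ : ℝ) (ha : a ≠ 0) (hθ : θ ≠ 0) :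
    Tendsto (rT a c θ) rl (𝓝 ((4 * Real.pi * c / a ^ 2 : ℝ) : ℂ)) := by
  have h1 : Tendsto (fun x : ℝ × ℂ => ((rP a c θ x.1 : ℝ) : ℂ)) rl
      (𝓝 ((4 * Real.pi * c / a ^ 2 : ℝ) : ℂ)) := by
    rw [← rP_zero a c θ ha hθ]
    exact (Complex.continuous_ofReal.tendsto _).comp
      ((rP_diff a c θ ha hθ).continuousAt.tendsto.comp rl_fst')
  have h2 : Tendsto (fun x : ℝ × ℂ => ((4 * Real.pi / rK a c θ x.1 : ℝ) : ℂ)) rl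
      (𝓝 ((4 * Real.pi / (θ * a) : ℝ) : ℂ)) :=
    (Complex.continuous_ofReal.tendsto _).comp
      (tendsto_const_nhds.div ((rK_tendsto a c θ).comp rl_fst') (mul_ne_zero hθ ha))
  have h3 := h1.add (h2.mul rl_mul)
  rw [mul_zero, add_zero] at h3
  exact h3

lemma rS_tendsto (a c θ : ℝ) (ha : a ≠ 0) (hθ : θ ≠ 0) :
    Tendsto (fun x : ℝ × ℂ => (x.1 : ℂ) * rT a c θ x) rl (𝓝 0) := by
  have h1 : Tendsto (fun x : ℝ × ℂ => (x.1 : ℂ)) rl (𝓝 0) := by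
    have := (Complex.continuous_ofReal.tendsto 0).comp rl_fst'
    simpa [Function.comp_def] using this
  simpa using h1.mul (rT_tendsto a c θ ha hθ)

lemma rZ_tendsto (a c θ : ℝ) (ha : a ≠ 0) (hθ : θ ≠ 0) :
    Tendsto (fun x : ℝ × ℂ => rZ a c θ x / x.1) rl
      (𝓝 ((-(4 * Real.pi * c / a ^ 2) : ℝ) : ℂ)) := by
  have hφ : ContinuousAt (dslope Complex.exp 0) 0 := by
    rw [continuousAt_dslope_same]; exact Complex.differentiableAt_exp
  have h0 : dslope Complex.exp 0 0 = 1 := by simp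
  have h1 := (hφ.tendsto.comp (rS_tendsto a c θ ha hθ))
  rw [h0] at h1
  have h2 := ((rT_tendsto a c θ ha hθ).mul h1).neg
  rw [mul_one] at h2
  rw [Complex.ofReal_neg]
  refine h2.congr' ?_
  filter_upwards [rl_pos] with x hx
  have hx' : (x.1 : ℂ) ≠ 0 := by exact_mod_cast hx.ne'
  have := sub_smul_dslope Complex.exp 0 ((x.1 : ℂ) * rT a c θ x)
  simp only [sub_zero, smul_eq_mul, Complex.exp_zero] at this
  unfold rZ
  rw [eq_div_iff hx', Function.comp]
  linear_combination -this

lemma rlog_eq (ε : ℝ) (hε : 0 < ε) (z : ℂ) (hz : z / ε ≠ 0) :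
    Complex.log z = Real.log ε + Complex.log (z / ε) := by
  have hx' : (ε : ℂ) ≠ 0 := by exact_mod_cast hε.ne'
  rw [← Complex.log_ofReal_mul hε hz, mul_div_cancel₀ _ hx']

lemma rW_pos (a c : ℝ) (ha : a ≠ 0) (hc : c < 0) : 0 < -(4 * Real.pi * c / a ^ 2) := by
  have h1 : 0 < 4 * Real.pi * (-c) / a ^ 2 := by
    have : 0 < -c := by linarith
    positivity
  have : 4 * Real.pi * (-c) / a ^ 2 = -(4 * Real.pi * c / a ^ 2) := by ring
  linarith

lemma rW_slit (a c θ : ℝ) (ha : a ≠ 0) (hθ : θ ≠ 0) (hc : c < 0) :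
    ∀ᶠ x in rl, rZ a c θ x / x.1 ∈ Complex.slitPlane :=
  (rZ_tendsto a c θ ha hθ).eventually (Complex.isOpen_slitPlane.mem_nhds
    (Complex.ofReal_mem_slitPlane.2 (rW_pos a c ha hc)))

lemma rlogW_tendsto (a c θ : ℝ) (ha : a ≠ 0) (hθ : θ ≠ 0) (hc : c < 0) :
    Tendsto (fun x : ℝ × ℂ => Complex.log (rZ a c θ x / x.1)) rl
      (𝓝 ((Real.log (-(4 * Real.pi * c / a ^ 2)) : ℝ) : ℂ)) := by
  rw [Complex.ofReal_log (rW_pos a c ha hc).le]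
  exact (rZ_tendsto a c θ ha hθ).clog (Complex.ofReal_mem_slitPlane.2 (rW_pos a c ha hc))

/-- `F` without the real `log ε` part. -/
noncomputable def rH (a c θ : ℝ) (x : ℝ × ℂ) : ℂ :=
  ((a + c * x.1 : ℝ) : ℂ) + (rK a c θ x.1 : ℂ) *
    (Complex.log (rZ a c θ x / x.1) / (4 * Real.pi) - Complex.I / 4 - ((1 / a : ℝ) : ℂ))

lemma rF_eq (a c θ : ℝ) (ha : a ≠ 0) (hθ : θ ≠ 0) (hc : c < 0) :
    ∀ᶠ x in rl, rF a c θ x =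
      ((rK a c θ x.1 / (4 * Real.pi) * Real.log x.1 : ℝ) : ℂ) + rH a c θ x := by
  filter_upwards [rl_pos, rW_slit a c θ ha hθ hc] with x hx hs
  unfold rF rH
  rw [rlog_eq x.1 hx _ (Complex.slitPlane_ne_zero hs)]
  push_cast
  ring

lemma rH_tendsto (a c θ : ℝ) (ha : a ≠ 0) (hθ : θ ≠ 0) (hc : c < 0) :
    Tendsto (rH a c θ) rl (𝓝 ((a : ℂ) + ((θ * a : ℝ) : ℂ) *
      (((Real.log (-(4 * Real.pi * c / a ^ 2)) : ℝ) : ℂ) / (4 * Real.pi) - Complex.I / 4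
        - ((1 / a : ℝ) : ℂ)))) := by
  have hA : Tendsto (fun x : ℝ × ℂ => ((a + c * x.1 : ℝ) : ℂ)) rl (𝓝 (a : ℂ)) := by
    have h : Continuous (fun ε : ℝ => ((a + c * ε : ℝ) : ℂ)) := by fun_prop
    have := (h.tendsto 0).comp rl_fst'
    simpa [Function.comp_def] using this
  have hK : Tendsto (fun x : ℝ × ℂ => (rK a c θ x.1 : ℂ)) rl (𝓝 ((θ * a : ℝ) : ℂ)) :=
    (Complex.continuous_ofReal.tendsto _).comp ((rK_tendsto a c θ).comp rl_fst')
  exact hA.add (hK.mul ((((rlogW_tendsto a c θ ha hθ hc).div_const _).sub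
    tendsto_const_nhds).sub tendsto_const_nhds))

lemma rlog_atBot : Tendsto (fun x : ℝ × ℂ => Real.log x.1) rl atBot :=
  Real.tendsto_log_nhdsGT_zero.comp rl_fst

lemma rF_div (a c θ : ℝ) (ha : a ≠ 0) (hθ : θ ≠ 0) (hc : c < 0) :
    Tendsto (fun x : ℝ × ℂ => rF a c θ x / (Real.log x.1 : ℝ)) rl
      (𝓝 ((θ * a / (4 * Real.pi) : ℝ) : ℂ)) := by
  have hK : Tendsto (fun x : ℝ × ℂ => ((rK a c θ x.1 / (4 * Real.pi) : ℝ) : ℂ)) rl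
      (𝓝 ((θ * a / (4 * Real.pi) : ℝ) : ℂ)) :=
    (Complex.continuous_ofReal.tendsto _).comp
      (((rK_tendsto a c θ).comp rl_fst').div_const _)
  have hi : Tendsto (fun x : ℝ × ℂ => (((Real.log x.1)⁻¹ : ℝ) : ℂ)) rl (𝓝 0) := by
    have := (Complex.continuous_ofReal.tendsto 0).comp (tendsto_inv_atBot_zero.comp rlog_atBot)
    simpa [Function.comp_def] using this
  have := hK.add ((rH_tendsto a c θ ha hθ hc).mul hi)
  rw [mul_zero, add_zero] at this
  refine this.congr' ?_
  filter_upwards [rF_eq a c θ ha hθ hc, rlog_atBot.eventually (eventually_lt_atBot 0)] with x hx hl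
  have hl' : ((Real.log x.1 : ℝ) : ℂ) ≠ 0 := by exact_mod_cast hl.ne
  rw [hx]
  push_cast at hl' ⊢
  field_simp

lemma rF_im (a c θ : ℝ) (ha : a ≠ 0) (hθ : θ ≠ 0) (hc : c < 0) :
    Tendsto (fun x : ℝ × ℂ => (rF a c θ x).im) rl (𝓝 (-(θ * a / 4))) := by
  have h := (Complex.continuous_im.tendsto _).comp (rH_tendsto a c θ ha hθ hc)
  have e : ((a : ℂ) + ((θ * a : ℝ) : ℂ) *
      (((Real.log (-(4 * Real.pi * c / a ^ 2)) : ℝ) : ℂ) / (4 * Real.pi) - Complex.I / 4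
        - ((1 / a : ℝ) : ℂ))).im = -(θ * a / 4) := by
    have : (((Real.log (-(4 * Real.pi * c / a ^ 2)) : ℝ) : ℂ) / (4 * Real.pi)) =
      ((Real.log (-(4 * Real.pi * c / a ^ 2)) / (4 * Real.pi) : ℝ) : ℂ) := by push_cast; ring
    have h2 : Complex.I / 4 = ((1 / 4 : ℝ) : ℂ) * Complex.I := by push_cast; ring
    rw [this, h2, Complex.add_im, Complex.im_ofReal_mul, Complex.sub_im, Complex.sub_im,
      Complex.im_ofReal_mul, Complex.ofReal_im, Complex.ofReal_im, Complex.ofReal_im,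
      Complex.I_im]
    ring
  rw [e] at h
  refine h.congr' ?_
  filter_upwards [rF_eq a c θ ha hθ hc] with x hx
  rw [hx, Complex.add_im, Complex.ofReal_im, zero_add]; rfl

lemma rF_atTop (a c θ : ℝ) (ha : a ≠ 0) (hθ : θ ≠ 0) (hc : c < 0) :
    Tendsto (fun x : ℝ × ℂ => ‖rF a c θ x‖) rl atTop := by
  have h1 := (rF_div a c θ ha hθ hc).norm
  have hpos : 0 < ‖((θ * a / (4 * Real.pi) : ℝ) : ℂ)‖ := by
    rw [norm_pos_iff]
    exact_mod_cast div_ne_zero (mul_ne_zero hθ ha) (by positivity)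
  have h2 : Tendsto (fun x : ℝ × ℂ => |Real.log x.1|) rl atTop :=
    tendsto_abs_atBot_atTop.comp rlog_atBot
  refine (h1.pos_mul_atTop hpos h2).congr' ?_
  filter_upwards [rlog_atBot.eventually (eventually_lt_atBot 0)] with x hl
  have : |Real.log x.1| ≠ 0 := abs_ne_zero.2 hl.ne
  rw [norm_div, Complex.norm_real, Real.norm_eq_abs]
  field_simp

lemma rq_exists (a c θ : ℝ) (ha : a ≠ 0) (hθ : θ ≠ 0) (hc : c < 0) :
    ∀ᶠ ε in 𝓝[>] (0 : ℝ), ∃ q : ℂ, ‖q‖ ≤ 1 ∧ (rF a c θ (ε, q))⁻¹ = q := by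
  have h := (((rF_atTop a c θ ha hθ hc).eventually_ge_atTop 4).and
    (rW_slit a c θ ha hθ hc)).and rl_pos
  rw [rl, eventually_prod_principal_iff] at h
  filter_upwards [h] with ε hε
  apply res_fixed
  · intro q hq
    obtain ⟨⟨h1, h2⟩, h3⟩ := hε q hq
    have hz : rZ a c θ (ε, q) ∈ Complex.slitPlane := by
      have h3' : (ε : ℂ) ≠ 0 := by exact_mod_cast (show (0:ℝ) < ε from h3).ne'
      have e : rZ a c θ (ε, q) = (ε : ℝ) • (rZ a c θ (ε, q) / ε) := by
        rw [Complex.real_smul, mul_div_cancel₀ _ h3']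
      rw [e]
      simp only [Complex.mem_slitPlane_iff, Complex.smul_re, Complex.smul_im, smul_eq_mul] at h2 ⊢
      rcases h2 with h2 | h2
      · left; exact mul_pos h3 h2
      · right; exact mul_ne_zero h3.ne' h2
    have hne : rF a c θ (ε, q) ≠ 0 := by
      intro h0; rw [h0, norm_zero] at h1; norm_num at h1
    apply DifferentiableAt.differentiableWithinAt
    refine DifferentiableAt.fun_inv (h := fun q => rF a c θ (ε, q)) ?_ hne
    unfold rF
    have hZ : DifferentiableAt ℂ (fun q => rZ a c θ (ε, q)) q := by
      unfold rZ rT; simp only; fun_prop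
    have hL := hZ.clog hz
    simp only
    fun_prop
  · intro q hq
    obtain ⟨⟨h1, h2⟩, h3⟩ := hε q hq
    rw [norm_inv, one_div]
    exact inv_anti₀ (by norm_num) h1

lemma rE_main (a c θ : ℝ) (ha : a ≠ 0) (hθ : θ ≠ 0) (hc : c < 0) :
    ∃ E : ℝ → ℂ,
      (∀ᶠ ε in 𝓝[>] (0 : ℝ),
        (((a + c * ε : ℝ) : ℂ) +
            ((θ * (a + c * ε) - ε ^ 2 : ℝ) : ℂ) *
              (Complex.log (E ε) / (4 * Real.pi) - Complex.I / 4 - ((1 / a : ℝ) : ℂ))) *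
          ((θ : ℂ) +
            ((θ * (a + c * ε) - ε ^ 2 : ℝ) : ℂ) *
              (Complex.log (1 - E ε) / (4 * Real.pi) - ((1 / a : ℝ) : ℂ))) -
          ((ε : ℂ)) ^ 2 = 0) ∧
      (fun ε => (E ε).re - 4 * Real.pi * |c| * ε / a ^ 2) =O[𝓝[>] (0 : ℝ)] (fun ε => ε ^ 2) ∧
      Tendsto (fun ε => (E ε).im * ((Real.log ε) ^ 2 / ε ^ 2)) (𝓝[>] (0 : ℝ))
        (𝓝 (-(16 * Real.pi ^ 3 / (a ^ 2 * θ ^ 2)))) := by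
  obtain ⟨q, hq⟩ := (rq_exists a c θ ha hθ hc).choice
  have hx : Tendsto (fun ε => (ε, q ε)) (𝓝[>] (0 : ℝ)) rl := by
    refine tendsto_id.prodMk (tendsto_principal.2 ?_)
    filter_upwards [hq] with ε h
    have := h.1
    simp only [Metric.mem_ball, dist_zero_right]
    linarith
  have hs0 := (rS_tendsto a c θ ha hθ).comp hx
  have hpos : ∀ᶠ ε in 𝓝[>] (0 : ℝ), 0 < ε := self_mem_nhdsWithin
  have hsmall : ∀ᶠ ε : ℝ in 𝓝[>] (0 : ℝ), ‖(ε : ℂ) * rT a c θ (ε, q ε)‖ < 1 := by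
    have := hs0.norm
    rw [norm_zero] at this
    exact this.eventually_lt_const one_pos
  have hK0 : Tendsto (rK a c θ) (𝓝[>] 0) (𝓝 (θ * a)) :=
    (rK_tendsto a c θ).mono_left nhdsWithin_le_nhds
  have hKne : ∀ᶠ ε in 𝓝[>] (0 : ℝ), rK a c θ ε ≠ 0 := hK0.eventually_ne (mul_ne_zero hθ ha)
  have hFne : ∀ᶠ ε in 𝓝[>] (0 : ℝ), rF a c θ (ε, q ε) ≠ 0 := by
    filter_upwards [((rF_atTop a c θ ha hθ hc).comp hx).eventually_gt_atTop 0] with ε h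
    exact norm_pos_iff.1 h
  refine ⟨fun ε => rZ a c θ (ε, q ε), ?_, ?_, ?_⟩
  · filter_upwards [hq, hsmall, hKne, hFne] with ε h1 h2 h3 h4
    have him := (Complex.abs_im_le_norm ((ε : ℂ) * rT a c θ (ε, q ε))).trans h2.le
    rw [abs_le] at him
    have hlog : Complex.log (1 - rZ a c θ (ε, q ε)) = (ε : ℂ) * rT a c θ (ε, q ε) := by
      unfold rZ
      rw [sub_sub_cancel]
      apply Complex.log_exp <;> linarith [Real.pi_gt_three]
    have hF : (((a + c * ε : ℝ) : ℂ) +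
            ((θ * (a + c * ε) - ε ^ 2 : ℝ) : ℂ) *
              (Complex.log (rZ a c θ (ε, q ε)) / (4 * Real.pi) - Complex.I / 4
                - ((1 / a : ℝ) : ℂ))) = rF a c θ (ε, q ε) := rfl
    have hF2 : ((θ : ℂ) + ((θ * (a + c * ε) - ε ^ 2 : ℝ) : ℂ) *
              ((ε : ℂ) * rT a c θ (ε, q ε) / (4 * Real.pi) - ((1 / a : ℝ) : ℂ)))
              = (ε : ℂ) ^ 2 * q ε := by
      have hK' : ((rK a c θ ε : ℝ) : ℂ) ≠ 0 := by exact_mod_cast h3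
      have ha' : (a : ℂ) ≠ 0 := by exact_mod_cast ha
      have hpi : (Real.pi : ℂ) ≠ 0 := by exact_mod_cast Real.pi_ne_zero
      have e1 : ((θ * (a + c * ε) - ε ^ 2 : ℝ) : ℂ) = (rK a c θ ε : ℝ) := rfl
      have e2 : ((rK a c θ ε : ℝ) : ℂ) = θ * (a + c * ε) - ε ^ 2 := by
        unfold rK; push_cast; ring
      rw [e1]
      unfold rT rP
      simp only
      push_cast
      have : (θ : ℂ) + (rK a c θ ε : ℂ) * ((ε : ℂ) * (4 * Real.pi / (rK a c θ ε * a) * (θ * c - ε)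
          + 4 * Real.pi / (rK a c θ ε) * (ε * q ε)) / (4 * Real.pi) - 1 / a)
          = θ + (ε * (θ * c - ε) - rK a c θ ε) / a + ε ^ 2 * q ε := by
        field_simp
        ring
      rw [this, e2]
      field_simp
      ring
    rw [hlog, hF, hF2]
    have : rF a c θ (ε, q ε) * q ε = 1 := by
      nth_rewrite 2 [← h1.2]
      exact mul_inv_cancel₀ h4
    linear_combination (ε : ℂ) ^ 2 * this
  · have hTb : (fun ε : ℝ => rT a c θ (ε, q ε)) =O[𝓝[>] (0 : ℝ)] (fun _ => (1 : ℝ)) :=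
      ((rT_tendsto a c θ ha hθ).comp hx).isBigO_one ℝ
    have hid : (fun ε : ℝ => (ε : ℂ)) =O[𝓝[>] (0 : ℝ)] (fun ε => ε) :=
      Asymptotics.IsBigO.of_bound 1 (Eventually.of_forall fun ε => by simp)
    have hsb : (fun ε : ℝ => (ε : ℂ) * rT a c θ (ε, q ε)) =O[𝓝[>] (0 : ℝ)] (fun ε => ε) := by
      simpa using hid.mul hTb
    have hexp : (fun ε : ℝ => (Complex.exp ((ε : ℂ) * rT a c θ (ε, q ε)) - 1
        - (ε : ℂ) * rT a c θ (ε, q ε)).re) =O[𝓝[>] (0 : ℝ)] (fun ε => ε ^ 2) := by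
      refine Asymptotics.IsBigO.trans ?_ (hsb.pow 2)
      apply Asymptotics.IsBigO.of_bound 1
      filter_upwards [hsmall] with ε h
      rw [Real.norm_eq_abs, norm_pow, one_mul]
      exact (Complex.abs_re_le_norm _).trans (Complex.norm_exp_sub_one_sub_id_le h.le)
    have hPb : (fun ε : ℝ => ε * (rP a c θ ε - rP a c θ 0)) =O[𝓝[>] (0 : ℝ)] (fun ε => ε ^ 2) := by
      have := (rP_diff a c θ ha hθ).isBigO_sub.mono (nhdsWithin_le_nhds (s := Set.Ioi 0))
      have := (Asymptotics.isBigO_refl (fun ε : ℝ => ε) (𝓝[>] (0 : ℝ))).mul this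
      simpa [sq] using this
    have hqb : (fun ε : ℝ => 4 * Real.pi / rK a c θ ε * (q ε).re * ε ^ 2) =O[𝓝[>] (0 : ℝ)]
        (fun ε => ε ^ 2) := by
      have h1 : (fun ε : ℝ => 4 * Real.pi / rK a c θ ε) =O[𝓝[>] (0 : ℝ)] (fun _ => (1 : ℝ)) :=
        (tendsto_const_nhds.div hK0 (mul_ne_zero hθ ha)).isBigO_one ℝ
      have h2 : (fun ε : ℝ => (q ε).re) =O[𝓝[>] (0 : ℝ)] (fun _ => (1 : ℝ)) := by
        apply Asymptotics.IsBigO.of_bound 1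
        filter_upwards [hq] with ε h
        simpa using (Complex.abs_re_le_norm _).trans h.1
      simpa using (h1.mul h2).mul (Asymptotics.isBigO_refl (fun ε : ℝ => ε ^ 2) (𝓝[>] (0 : ℝ)))
    refine ((hexp.add hPb).add hqb).neg_left.congr_left ?_
    intro ε
    have hre : ((ε : ℂ) * rT a c θ (ε, q ε)).re =
        ε * rP a c θ ε + 4 * Real.pi / rK a c θ ε * (q ε).re * ε ^ 2 := by
      unfold rT
      rw [Complex.re_ofReal_mul, Complex.add_re, Complex.re_ofReal_mul, Complex.re_ofReal_mul,
        Complex.ofReal_re]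
      ring
    rw [Complex.sub_re, hre, rP_zero a c θ ha hθ, abs_of_neg hc]
    simp only [rZ, Complex.sub_re, Complex.one_re]
    ring
  · have hqim : Tendsto (fun ε => (q ε).im * (Real.log ε) ^ 2) (𝓝[>] (0 : ℝ))
        (𝓝 (-(-(θ * a / 4)) / (θ * a / (4 * Real.pi)) ^ 2)) := by
      have h1 := (Complex.continuous_normSq.tendsto _).comp ((rF_div a c θ ha hθ hc).comp hx)
      rw [Complex.normSq_ofReal, ← sq] at h1
      have h2 := ((rF_im a c θ ha hθ hc).comp hx).neg
      have h3 := h2.div h1 (pow_ne_zero 2 (div_ne_zero (mul_ne_zero hθ ha) (by positivity)))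
      refine h3.congr' ?_
      filter_upwards [hq, hFne, Real.tendsto_log_nhdsGT_zero.eventually (eventually_lt_atBot 0)]
        with ε h4 h5 h6
      have h7 : Complex.normSq (rF a c θ (ε, q ε)) ≠ 0 := by simpa using h5
      have h8 := h6.ne
      have h9 : (q ε).im = -(rF a c θ (ε, q ε)).im / Complex.normSq (rF a c θ (ε, q ε)) := by
        rw [← Complex.inv_im, h4.2]
      rw [h9]
      simp only [Pi.div_apply, Function.comp_apply, Complex.normSq_div, Complex.normSq_ofReal]
      field_simp
    have hsre := (Real.continuous_exp.tendsto _).comp ((Complex.continuous_re.tendsto _).comp hs0)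
    have hsim := (Real.continuous_sinc.tendsto _).comp ((Complex.continuous_im.tendsto _).comp hs0)
    rw [Complex.zero_re, Real.exp_zero] at hsre
    rw [Complex.zero_im, Real.sinc_zero] at hsim
    have hk : Tendsto (fun ε : ℝ => 4 * Real.pi / rK a c θ ε) (𝓝[>] 0)
      (𝓝 (4 * Real.pi / (θ * a))) := tendsto_const_nhds.div hK0 (mul_ne_zero hθ ha)
    have hall := (((hsre.mul hsim).mul hk).mul hqim).neg
    have hval : -(1 * 1 * (4 * Real.pi / (θ * a)) * (-(-(θ * a / 4)) / (θ * a / (4 * Real.pi)) ^ 2))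
        = -(16 * Real.pi ^ 3 / (a ^ 2 * θ ^ 2)) := by
      have := Real.pi_ne_zero
      field_simp
      ring
    rw [hval] at hall
    refine hall.congr' ?_
    filter_upwards [hpos] with ε hε
    have him : ((ε : ℂ) * rT a c θ (ε, q ε)).im = 4 * Real.pi / rK a c θ ε * (q ε).im * ε ^ 2 := by
      unfold rT
      rw [Complex.im_ofReal_mul, Complex.add_im, Complex.im_ofReal_mul, Complex.im_ofReal_mul,
        Complex.ofReal_im]
      ring
    have hsinc : ∀ y : ℝ, Real.sin y = y * Real.sinc y := by
      intro y
      by_cases hy : y = 0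
      · simp [hy]
      · rw [Real.sinc_of_ne_zero hy]; field_simp
    have hZim : (rZ a c θ (ε, q ε)).im = -(Real.exp ((ε : ℂ) * rT a c θ (ε, q ε)).re *
        ((4 * Real.pi / rK a c θ ε * (q ε).im * ε ^ 2) *
          Real.sinc ((ε : ℂ) * rT a c θ (ε, q ε)).im)) := by
      rw [← him, ← hsinc, rZ, Complex.sub_im, Complex.exp_im, Complex.one_im, zero_sub]
    rw [hZim]
    simp only [Function.comp_apply]
    field_simp

/-- d = 2, c < 0, θ₀ ≠ 0: for small ε the analytically continued resolvent
denominator (principal logarithms) has a zero `E_ε^r` with negative imaginary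
part, with `Re(E_ε^r) = 4π|c|ε/a² + O(ε²)` and
`Im(E_ε^r) = −16π³ε²/(a²θ₀²(ln ε)²) + o(ε²/(ln ε)²)`. -/
theorem resonance_d2 (a c θ₀ : ℝ)
    (ha : a = 2 * Real.pi / (Real.log 2 - Real.eulerMascheroniConstant))
    (hc : c < 0) (hθ : θ₀ ≠ 0) :
    ∃ C > (0 : ℝ), ∃ ε₀ > (0 : ℝ), ∃ E : ℝ → ℂ,
      (∀ ε : ℝ, 0 < ε → ε < ε₀ →
        (((a + c * ε : ℝ) : ℂ) +
            ((θ₀ * (a + c * ε) - ε ^ 2 : ℝ) : ℂ) *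
              (Complex.log (E ε) / (4 * Real.pi) - Complex.I / 4 - ((1 / a : ℝ) : ℂ))) *
          ((θ₀ : ℂ) +
            ((θ₀ * (a + c * ε) - ε ^ 2 : ℝ) : ℂ) *
              (Complex.log (1 - E ε) / (4 * Real.pi) - ((1 / a : ℝ) : ℂ))) -
          ((ε : ℂ)) ^ 2 = 0 ∧
        (E ε).im < 0 ∧
        |(E ε).re - 4 * Real.pi * |c| * ε / a ^ 2| ≤ C * ε ^ 2) ∧
      (∀ δ > (0 : ℝ), ∃ ε₁ > (0 : ℝ), ∀ ε : ℝ, 0 < ε → ε < ε₁ → ε < ε₀ →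
        |(E ε).im + 16 * Real.pi ^ 3 * ε ^ 2 / (a ^ 2 * θ₀ ^ 2 * (Real.log ε) ^ 2)| ≤
          δ * ε ^ 2 / (Real.log ε) ^ 2) := by
  
  have hd : 0 < Real.log 2 - Real.eulerMascheroniConstant := by
    linarith [Real.eulerMascheroniConstant_lt_two_thirds, Real.log_two_gt_d9]
  have ha0 : a ≠ 0 := by
    rw [ha]
    exact div_ne_zero (by positivity) hd.ne'
  clear ha
  obtain ⟨E, h1, h2, h3⟩ := rE_main a c θ₀ ha0 hθ hc
  obtain ⟨C, hC, h2⟩ := h2.exists_pos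
  have h2 := h2.bound
  have hneg : -(16 * Real.pi ^ 3 / (a ^ 2 * θ₀ ^ 2)) < 0 := by
    have : 0 < 16 * Real.pi ^ 3 / (a ^ 2 * θ₀ ^ 2) := by positivity
    linarith
  have h4 := h3.eventually_lt_const hneg
  obtain ⟨ε₀, hε₀, hsub⟩ := mem_nhdsGT_iff_exists_Ioo_subset.1 ((h1.and h2).and h4)
  refine ⟨C, hC, ε₀, hε₀, E, ?_, ?_⟩
  · intro ε h5 h6
    obtain ⟨⟨h7, h8⟩, h9⟩ := hsub ⟨h5, h6⟩
    refine ⟨h7, ?_, ?_⟩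
    · by_contra hcon
      have : 0 ≤ (E ε).im * ((Real.log ε) ^ 2 / ε ^ 2) :=
        mul_nonneg (not_lt.1 hcon) (by positivity)
      exact absurd h9 (not_lt.2 this)
    · have h10 : ‖ε ^ 2‖ = ε ^ 2 := by rw [Real.norm_eq_abs, abs_of_nonneg (sq_nonneg ε)]
      rw [h10] at h8
      exact h8
  · intro δ hδ
    have h5 := Metric.tendsto_nhds.1 h3 δ hδ
    have h6 := Real.tendsto_log_nhdsGT_zero.eventually (eventually_lt_atBot 0)
    obtain ⟨ε₁, hε₁, hsub1⟩ := mem_nhdsGT_iff_exists_Ioo_subset.1 (h5.and h6)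
    refine ⟨ε₁, hε₁, ?_⟩
    intro ε h7 h8 _
    obtain ⟨h9, h10⟩ := hsub1 ⟨h7, h8⟩
    have h10' : Real.log ε ≠ 0 := ne_of_lt h10
    have hp : 0 < ε ^ 2 / (Real.log ε) ^ 2 := by positivity
    have h11 : (E ε).im + 16 * Real.pi ^ 3 * ε ^ 2 / (a ^ 2 * θ₀ ^ 2 * (Real.log ε) ^ 2) =
        ((E ε).im * ((Real.log ε) ^ 2 / ε ^ 2) - (-(16 * Real.pi ^ 3 / (a ^ 2 * θ₀ ^ 2)))) *
          (ε ^ 2 / (Real.log ε) ^ 2) := by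
      field_simp
      ring
    rw [h11, abs_mul, abs_of_pos hp, mul_div_assoc δ]
    rw [Real.dist_eq] at h9
    exact mul_le_mul_of_nonneg_right h9.le hp.le
end

section
/- Let a = 2π/(ln 2 − γ), where γ is the Euler–Mascheroni constant, let c < 0 and θ₀ = 0. Then there exist C > 0 and ε₀ > 0 such that for all 0 < ε < ε₀ the equation Log(1−z)/(4π) − 1/a = −1/(a + cε − ε²·(Log z/(4π) − i/4 − 1/a)), with Log the principal complex logarithm, has a solution E_ε^r with Im(E_ε^r) < 0 satisfying |Re(E_ε^r) − 4π|c|ε/a²| ≤ C·ε²·|ln ε|, and for every δ > 0 there is ε₁ > 0 such that for 0 < ε < ε₁, |Im(E_ε^r) + πε²/a²| ≤ δε². -/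
open Complex

lemma aux_log_lip (R : ℝ) (hR : 0 < R) (z z' : ℂ)
    (hz : z ∈ Metric.closedBall (R : ℂ) (R / 2)) (hz' : z' ∈ Metric.closedBall (R : ℂ) (R / 2)) :
    ‖Complex.log z - Complex.log z'‖ ≤ 2 / R * ‖z - z'‖ := by
  have key : ∀ x ∈ Metric.closedBall (R : ℂ) (R / 2), R / 2 ≤ x.re := by
    intro x hx
    rw [mem_closedBall_iff_norm] at hx
    have h1 := (Complex.abs_re_le_norm (x - R)).trans hx
    rw [Complex.sub_re, Complex.ofReal_re, abs_le] at h1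
    linarith [h1.1]
  refine Convex.norm_image_sub_le_of_norm_hasDerivWithin_le (𝕜 := ℂ) (f := Complex.log)
    (f' := fun x => x⁻¹) (s := Metric.closedBall (R : ℂ) (R / 2)) ?_ ?_
    (convex_closedBall _ _) hz' hz
  · intro x hx
    refine (Complex.hasDerivAt_log (Or.inl ?_)).hasDerivWithinAt
    linarith [key x hx]
  · intro x hx
    have h2 : R / 2 ≤ ‖x‖ := (key x hx).trans ((le_abs_self _).trans (Complex.abs_re_le_norm x))
    rw [norm_inv, show 2 / R = (R / 2)⁻¹ by rw [inv_div]]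
    exact inv_anti₀ (by linarith) h2

lemma aux_strict (P : ℂ → ℂ) (κ : ℝ) (hP : HasStrictDerivAt P (-(κ : ℂ)) 0) (η : ℝ) (hη : 0 < η) :
    ∃ r > 0, ∀ x y : ℂ, ‖x‖ < r → ‖y‖ < r → ‖P x - P y + κ * (x - y)‖ ≤ η * ‖x - y‖ := by
  have h := hP.hasStrictFDerivAt.isLittleO.def hη
  rw [nhds_prod_eq] at h
  rw [Filter.eventually_prod_self_iff'] at h
  obtain ⟨t, ht, h⟩ := h
  obtain ⟨r, hr, hrt⟩ := Metric.mem_nhds_iff.1 ht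
  refine ⟨r, hr, fun x y hx hy => ?_⟩
  have := h x (hrt (by simpa using hx)) y (hrt (by simpa using hy))
  refine le_trans (le_of_eq ?_) this
  congr 1
  simp
  ring

lemma aux_ev_lin (A b : ℝ) (hb : 0 < b) : ∀ᶠ ε : ℝ in nhdsWithin 0 (Set.Ioi 0), A * ε < b := by
  have : Filter.Tendsto (fun ε : ℝ => A * ε) (nhdsWithin 0 (Set.Ioi 0)) (nhds (A * 0)) :=
    ((continuous_const.mul continuous_id).tendsto 0).mono_left nhdsWithin_le_nhds
  rw [mul_zero] at this
  exact this.eventually_lt_const hb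

lemma aux_ev_log (A b : ℝ) (hb : 0 < b) :
    ∀ᶠ ε : ℝ in nhdsWithin 0 (Set.Ioi 0), A * (ε * |Real.log ε|) < b := by
  have : Filter.Tendsto (fun ε : ℝ => A * |ε * Real.log ε|) (nhdsWithin 0 (Set.Ioi 0))
      (nhds (A * |0 * Real.log 0|)) :=
    ((continuous_const.mul Real.continuous_mul_log.abs).tendsto 0).mono_left nhdsWithin_le_nhds
  simp only [zero_mul, abs_zero, mul_zero] at this
  filter_upwards [this.eventually_lt_const hb, self_mem_nhdsWithin] with ε h hε
  rwa [abs_mul, abs_of_pos (show (0 : ℝ) < ε from hε)] at h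

lemma aux_ev_one : ∀ᶠ ε : ℝ in nhdsWithin 0 (Set.Ioi 0), 1 ≤ |Real.log ε| := by
  filter_upwards [aux_ev_lin 1 (Real.exp (-1)) (Real.exp_pos _), self_mem_nhdsWithin] with ε h hε
  have : Real.log ε < -1 := (Real.log_lt_iff_lt_exp hε).2 (by linarith)
  rw [abs_of_neg (by linarith)]
  linarith

/-- The argument fed to the analytic function. -/
noncomputable def auxW (c : ℝ) (m : ℂ) (ε : ℝ) (z : ℂ) : ℂ :=
  c * ε - ε ^ 2 * (Complex.log z / (4 * Real.pi) + m)

lemma aux_pi : (1 : ℝ) ≤ 4 * Real.pi := by linarith [Real.pi_gt_three]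

lemma aux_norm_div_pi (x : ℂ) : ‖x / (4 * Real.pi)‖ ≤ ‖x‖ := by
  rw [norm_div]
  apply div_le_self (norm_nonneg _)
  have : ((4 : ℂ) * Real.pi) = ((4 * Real.pi : ℝ) : ℂ) := by push_cast; rfl
  rw [this, Complex.norm_real, Real.norm_of_nonneg (by linarith [aux_pi])]
  exact aux_pi

lemma aux_exists (P : ℂ → ℂ) (κ c : ℝ) (m : ℂ) (Q : ℂ → Prop) (hκ : 0 < κ) (hc : c < 0)
    (hP : HasStrictDerivAt P (-(κ : ℂ)) 0) (M : ℝ) (hM0 : 0 ≤ M)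
    (hM : ∀ᶠ t in nhds (0 : ℂ), ‖P t + κ * t‖ ≤ M * ‖t‖ ^ 2) (hQ : ∀ᶠ t in nhds (0 : ℂ), Q t) :
    ∃ C > 0, ∃ D > 0, ∀ᶠ ε : ℝ in nhdsWithin 0 (Set.Ioi 0), ∃ z : ℂ,
      z ∈ Metric.closedBall ((κ * (-c) * ε : ℝ) : ℂ) ((κ * (-c) * ε) / 2) ∧
      P (auxW c m ε z) = z ∧ ‖auxW c m ε z‖ ≤ D * ε ∧ Q (auxW c m ε z) ∧
      ‖z - ((κ * (-c) * ε : ℝ) : ℂ)‖ ≤ C * ε ^ 2 * |Real.log ε| := by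
  set k := κ * (-c) with hk
  have hk0 : 0 < k := mul_pos hκ (by linarith)
  obtain ⟨r₁, hr₁, hS⟩ := aux_strict P κ hP 1 one_pos
  obtain ⟨r₂, hr₂, hMQ⟩ := Metric.mem_nhds_iff.1 (hM.and hQ)
  set B : ℝ := 2 + |Real.log k| + ‖m‖ with hB
  have hB0 : 0 < B := by positivity
  set D : ℝ := |c| + B with hD
  have hD0 : 0 < D := by positivity
  set C : ℝ := M * D ^ 2 + κ * B with hC
  have hC0 : 0 < C := by positivity
  refine ⟨C, hC0, D, hD0, ?_⟩
  filter_upwards [self_mem_nhdsWithin, aux_ev_one, aux_ev_log 1 1 one_pos,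
    aux_ev_log C (k / 2) (by linarith), aux_ev_lin D r₁ hr₁, aux_ev_lin D r₂ hr₂,
    aux_ev_lin ((κ + 1) * (2 / k)) (1 / 2) (by norm_num)] with ε hε hl1 hl2 hl3 h4 h5 h6
  have hε0 : (0 : ℝ) < ε := hε
  set l := |Real.log ε| with hl
  have hR : 0 < k * ε := mul_pos hk0 hε0
  set S := Metric.closedBall ((k * ε : ℝ) : ℂ) ((k * ε) / 2) with hSdef
  have hcen : ((k * ε : ℝ) : ℂ) ∈ S := Metric.mem_closedBall_self (by linarith)
  -- bound on the logarithm
  have hlog : ∀ z ∈ S, ‖Complex.log z / (4 * Real.pi) + m‖ ≤ B * l := by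
    intro z hz
    have h1 := aux_log_lip (k * ε) hR z _ hz hcen
    have h2 : ‖z - ((k * ε : ℝ) : ℂ)‖ ≤ k * ε / 2 := mem_closedBall_iff_norm.1 hz
    have h3 : 2 / (k * ε) * ‖z - ((k * ε : ℝ) : ℂ)‖ ≤ 1 := by
      calc _ ≤ 2 / (k * ε) * (k * ε / 2) := by gcongr
        _ = 1 := by field_simp
    have h7 : ‖Complex.log ((k * ε : ℝ) : ℂ)‖ ≤ |Real.log k| + l := by
      rw [← Complex.ofReal_log hR.le, Complex.norm_real, Real.norm_eq_abs,
        Real.log_mul hk0.ne' hε0.ne']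
      exact abs_add_le _ _
    have h8 : ‖Complex.log z‖ ≤ 1 + (|Real.log k| + l) := by
      calc ‖Complex.log z‖ = ‖(Complex.log z - Complex.log ((k * ε : ℝ) : ℂ))
              + Complex.log ((k * ε : ℝ) : ℂ)‖ := by rw [sub_add_cancel]
        _ ≤ _ := (norm_add_le _ _).trans (add_le_add (h1.trans h3) h7)
    calc _ ≤ ‖Complex.log z / (4 * Real.pi)‖ + ‖m‖ := norm_add_le _ _
      _ ≤ 1 + (|Real.log k| + l) + ‖m‖ := by linarith [aux_norm_div_pi (Complex.log z)]
      _ ≤ B * l := by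
        rw [hB]
        nlinarith [abs_nonneg (Real.log k), norm_nonneg m,
          mul_nonneg (abs_nonneg (Real.log k)) (sub_nonneg.2 hl1),
          mul_nonneg (norm_nonneg m) (sub_nonneg.2 hl1)]
  have hw1 : ∀ z ∈ S, ‖auxW c m ε z - c * ε‖ ≤ B * ε ^ 2 * l := by
    intro z hz
    have : auxW c m ε z - c * ε = -((ε : ℂ) ^ 2 * (Complex.log z / (4 * Real.pi) + m)) := by
      unfold auxW; ring
    rw [this, norm_neg, norm_mul, norm_pow, Complex.norm_real, Real.norm_of_nonneg hε0.le]
    calc _ ≤ ε ^ 2 * (B * l) := by gcongr; exact hlog z hz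
      _ = _ := by ring
  have hw2 : ∀ z ∈ S, ‖auxW c m ε z‖ ≤ D * ε := by
    intro z hz
    have h1 : ‖(c : ℂ) * ε‖ = |c| * ε := by
      rw [norm_mul, Complex.norm_real, Complex.norm_real, Real.norm_of_nonneg hε0.le,
        Real.norm_eq_abs]
    have h2 : B * ε ^ 2 * l ≤ B * ε := by
      have : B * ε ^ 2 * l = (B * ε) * (ε * l) := by ring
      rw [this]
      have h9 : 0 < B * ε := by positivity
      nlinarith
    calc ‖auxW c m ε z‖ = ‖(auxW c m ε z - c * ε) + c * ε‖ := by rw [sub_add_cancel]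
      _ ≤ B * ε ^ 2 * l + |c| * ε := (norm_add_le _ _).trans (add_le_add (hw1 z hz) h1.le)
      _ ≤ D * ε := by rw [hD]; linarith
  have hMQ' : ∀ z ∈ S, ‖P (auxW c m ε z) + κ * auxW c m ε z‖ ≤ M * ‖auxW c m ε z‖ ^ 2 ∧
      Q (auxW c m ε z) := by
    intro z hz
    exact hMQ (by simpa using (hw2 z hz).trans_lt h5)
  have hmain : ∀ z ∈ S, ‖P (auxW c m ε z) - ((k * ε : ℝ) : ℂ)‖ ≤ C * ε ^ 2 * l := by
    intro z hz
    have h1 : P (auxW c m ε z) - ((k * ε : ℝ) : ℂ) =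
        (P (auxW c m ε z) + κ * auxW c m ε z) - κ * (auxW c m ε z - c * ε) := by
      rw [hk]; push_cast; ring
    rw [h1]
    have h2 : ‖(κ : ℂ) * (auxW c m ε z - c * ε)‖ ≤ κ * (B * ε ^ 2 * l) := by
      rw [norm_mul, Complex.norm_real, Real.norm_of_nonneg hκ.le]
      gcongr
      exact hw1 z hz
    have h3 : ‖P (auxW c m ε z) + κ * auxW c m ε z‖ ≤ M * (D * ε) ^ 2 :=
      (hMQ' z hz).1.trans (by gcongr; exact hw2 z hz)
    have h7 : M * (D * ε) ^ 2 ≤ M * (D * ε) ^ 2 * l := le_mul_of_one_le_right (by positivity) hl1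
    calc _ ≤ M * (D * ε) ^ 2 * l + κ * (B * ε ^ 2 * l) :=
          (norm_sub_le _ _).trans (add_le_add (h3.trans h7) h2)
      _ = _ := by rw [hC]; ring
  have hmaps : Set.MapsTo (fun z => P (auxW c m ε z)) S S := by
    intro z hz
    rw [hSdef, mem_closedBall_iff_norm]
    refine (hmain z hz).trans ?_
    have : C * ε ^ 2 * l = (C * (ε * l)) * ε := by ring
    rw [this]
    nlinarith
  have hlip : LipschitzOnWith (1 / 2) (fun z => P (auxW c m ε z)) S := by
    apply LipschitzOnWith.of_dist_le_mul
    intro z hz z' hz'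
    rw [dist_eq_norm, dist_eq_norm]
    have h1 := hS (auxW c m ε z) (auxW c m ε z') ((hw2 z hz).trans_lt h4)
      ((hw2 z' hz').trans_lt h4)
    have h2 : ‖P (auxW c m ε z) - P (auxW c m ε z')‖ ≤
        (κ + 1) * ‖auxW c m ε z - auxW c m ε z'‖ := by
      have h3 : P (auxW c m ε z) - P (auxW c m ε z') =
        (P (auxW c m ε z) - P (auxW c m ε z') + κ * (auxW c m ε z - auxW c m ε z')) -
          κ * (auxW c m ε z - auxW c m ε z') := by ring
      rw [h3]
      refine (norm_sub_le _ _).trans ?_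
      rw [norm_mul, Complex.norm_real, Real.norm_of_nonneg hκ.le]
      linarith
    have h3 : ‖auxW c m ε z - auxW c m ε z'‖ ≤ ε ^ 2 * (2 / (k * ε) * ‖z - z'‖) := by
      have : auxW c m ε z - auxW c m ε z' =
        -((ε : ℂ) ^ 2 * ((Complex.log z - Complex.log z') / (4 * Real.pi))) := by
        unfold auxW; ring
      rw [this, norm_neg, norm_mul, norm_pow, Complex.norm_real, Real.norm_of_nonneg hε0.le]
      gcongr
      exact (aux_norm_div_pi _).trans (aux_log_lip (k * ε) hR z z' hz hz')
    calc _ ≤ (κ + 1) * (ε ^ 2 * (2 / (k * ε) * ‖z - z'‖)) := h2.trans (by gcongr)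
      _ = ((κ + 1) * (2 / k) * ε) * ‖z - z'‖ := by field_simp
      _ ≤ (1 / 2) * ‖z - z'‖ := by gcongr
      _ = _ := by norm_num
  obtain ⟨z, hzS, hzf, -⟩ := ContractingWith.exists_fixedPoint' (K := 1 / 2)
    (Metric.isClosed_closedBall.isComplete : IsComplete S) hmaps
    ⟨by rw [← NNReal.coe_lt_coe]; norm_num, hlip.mapsToRestrict hmaps⟩ hcen (edist_ne_top _ _)
  have hzf' : P (auxW c m ε z) = z := hzf
  refine ⟨z, hzS, hzf', hw2 z hzS, (hMQ' z hzS).2, ?_⟩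
  have := hmain z hzS
  rwa [hzf'] at this

lemma aux_im (P : ℂ → ℂ) (κ c : ℝ) (m : ℂ) (hκ : 0 < κ) (hc : c < 0) (hm : m.im = -(1 / 4))
    (hP : HasStrictDerivAt P (-(κ : ℂ)) 0) (hPr : ∀ x : ℝ, (P x).im = 0) (C D : ℝ)
    (δ : ℝ) (hδ : 0 < δ) :
    ∀ᶠ ε : ℝ in nhdsWithin 0 (Set.Ioi 0), ∀ z : ℂ,
      z ∈ Metric.closedBall ((κ * (-c) * ε : ℝ) : ℂ) ((κ * (-c) * ε) / 2) →
      P (auxW c m ε z) = z → ‖auxW c m ε z‖ ≤ D * ε →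
      ‖z - ((κ * (-c) * ε : ℝ) : ℂ)‖ ≤ C * ε ^ 2 * |Real.log ε| →
      |z.im + κ * ε ^ 2 / 4| ≤ δ * ε ^ 2 := by
  set k := κ * (-c) with hk
  have hk0 : 0 < k := mul_pos hκ (by linarith)
  obtain ⟨r, hr, hS⟩ := aux_strict P κ hP (δ / 2) (by linarith)
  set ν : ℝ := min 1 (δ / (4 * κ)) with hν
  have hν0 : 0 < ν := by positivity
  have hν1 : ν ≤ 1 := min_le_left _ _
  have hν2 : κ * ν ≤ δ / 4 := by
    calc κ * ν ≤ κ * (δ / (4 * κ)) := by gcongr; exact min_le_right _ _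
      _ = δ / 4 := by field_simp
  filter_upwards [self_mem_nhdsWithin, aux_ev_log (2 / k * C) ν hν0, aux_ev_lin D r hr]
    with ε hε hl h4 z hzS hzP hzD hzC
  have hε0 : (0 : ℝ) < ε := hε
  have hR : 0 < k * ε := mul_pos hk0 hε0
  set w := auxW c m ε z with hw
  have harg : |(Complex.log z).im| ≤ ν := by
    have h1 := aux_log_lip (k * ε) hR z _ hzS (Metric.mem_closedBall_self (by linarith))
    have h2 := Complex.abs_im_le_norm (Complex.log z - Complex.log ((k * ε : ℝ) : ℂ))
    rw [← Complex.ofReal_log hR.le, Complex.sub_im, Complex.ofReal_im, sub_zero,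
      Complex.ofReal_log hR.le] at h2
    refine (h2.trans h1).trans ?_
    calc _ ≤ 2 / (k * ε) * (C * ε ^ 2 * |Real.log ε|) := by gcongr
      _ = 2 / k * C * (ε * |Real.log ε|) := by field_simp
      _ ≤ ν := hl.le
  have hwim : w.im = ε ^ 2 * (1 / 4) - ε ^ 2 * ((Complex.log z).im / (4 * Real.pi)) := by
    have : w = ((c * ε : ℝ) : ℂ) -
        ((ε ^ 2 : ℝ) : ℂ) * (Complex.log z / ((4 * Real.pi : ℝ) : ℂ) + m) := by
      rw [hw]; unfold auxW; push_cast; ring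
    rw [this, Complex.sub_im, Complex.ofReal_im, Complex.im_ofReal_mul, Complex.add_im,
      Complex.div_ofReal_im, hm]
    ring
  have hw1 : |w.im - ε ^ 2 * (1 / 4)| ≤ ν * ε ^ 2 := by
    rw [hwim, sub_sub_cancel_left, abs_neg, abs_mul, abs_of_pos (by positivity : (0:ℝ) < ε ^ 2),
      abs_div, abs_of_pos (by linarith [aux_pi] : (0:ℝ) < 4 * Real.pi), mul_comm]
    gcongr
    exact (div_le_self (abs_nonneg _) aux_pi).trans harg
  have h5 := hS w (w.re : ℂ) (hzD.trans_lt h4)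
    (by
      rw [Complex.norm_real]
      exact (Complex.abs_re_le_norm w).trans_lt (hzD.trans_lt h4))
  have h6 : w - (w.re : ℂ) = w.im * Complex.I := by
    nth_rewrite 1 [← Complex.re_add_im w]; ring
  rw [h6, norm_mul, Complex.norm_I, mul_one, Complex.norm_real, Real.norm_eq_abs, hzP] at h5
  have h7 := (Complex.abs_im_le_norm _).trans h5
  have h8 : (z - P (w.re : ℂ) + κ * (w.im * Complex.I)).im = z.im + κ * w.im := by
    simp [hPr]
  rw [h8] at h7
  have hε2 : 0 < ε ^ 2 := by positivity
  rw [abs_le] at hw1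
  have h9 : |w.im| ≤ (5 / 4) * ε ^ 2 := by
    rw [abs_le]; constructor <;> nlinarith [hw1.1, hw1.2]
  have h10 : |κ * (ε ^ 2 * (1 / 4) - w.im)| ≤ δ / 4 * ε ^ 2 := by
    rw [abs_mul, abs_of_pos hκ]
    calc _ ≤ κ * (ν * ε ^ 2) := by
          gcongr; rw [abs_le]; constructor <;> linarith [hw1.1, hw1.2]
      _ = (κ * ν) * ε ^ 2 := by ring
      _ ≤ _ := by gcongr
  calc |z.im + κ * ε ^ 2 / 4| = |(z.im + κ * w.im) + κ * (ε ^ 2 * (1 / 4) - w.im)| := by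
        congr 1; ring
    _ ≤ δ / 2 * ((5 / 4) * ε ^ 2) + δ / 4 * ε ^ 2 :=
        (abs_add_le _ _).trans (add_le_add (h7.trans (by gcongr)) h10)
    _ ≤ δ * ε ^ 2 := by nlinarith [mul_pos hδ hε2]

/-- The analytic function whose fixed points give resonances. -/
noncomputable def auxP (a : ℝ) (t : ℂ) : ℂ := 1 - Complex.exp (4 * Real.pi * t / (a * (a + t)))

lemma aux_q_tendsto (a : ℝ) (ha : a ≠ 0) :
    Filter.Tendsto (fun t : ℂ => 4 * Real.pi * t / (a * (a + t))) (nhds 0) (nhds 0) := by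
  have : ContinuousAt (fun t : ℂ => 4 * Real.pi * t / (a * (a + t))) 0 := by
    apply ContinuousAt.div (by fun_prop) (by fun_prop)
    simpa using ha
  simpa [ContinuousAt] using this

lemma auxP_analytic (a : ℝ) (ha : a ≠ 0) : AnalyticAt ℂ (auxP a) 0 := by
  have h : AnalyticAt ℂ (fun t : ℂ => 4 * Real.pi * t / (a * (a + t))) 0 := by
    apply AnalyticAt.div (by fun_prop) (by fun_prop)
    simpa using ha
  unfold auxP
  exact analyticAt_const.sub h.cexp

lemma auxP_deriv (a : ℝ) (ha : a ≠ 0) :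
    HasDerivAt (auxP a) (-((4 * Real.pi / a ^ 2 : ℝ) : ℂ)) 0 := by
  have ha' : (a : ℂ) ≠ 0 := by exact_mod_cast ha
  have h1 : HasDerivAt (fun t : ℂ => 4 * Real.pi * t) (4 * Real.pi * 1) 0 :=
    (hasDerivAt_id (0 : ℂ)).const_mul _
  have h2 : HasDerivAt (fun t : ℂ => (a : ℂ) * (a + t)) (a * 1) 0 :=
    ((hasDerivAt_id (0 : ℂ)).const_add _).const_mul _
  have h3 := ((h1.div h2 (by simpa using ha)).cexp).const_sub 1
  refine h3.congr_deriv ?_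
  simp
  field_simp

lemma auxP_quad (a : ℝ) (ha : a ≠ 0) : ∃ M : ℝ, 0 ≤ M ∧
    ∀ᶠ t in nhds (0 : ℂ), ‖auxP a t + ((4 * Real.pi / a ^ 2 : ℝ) : ℂ) * t‖ ≤ M * ‖t‖ ^ 2 := by
  have hA := auxP_analytic a ha
  obtain ⟨p, hp⟩ := hA
  have hs := hp.isBigO_sub_partialSum_pow 2
  obtain ⟨M, hM0, hM⟩ := hs.exists_nonneg
  refine ⟨M, hM0, ?_⟩
  filter_upwards [hM.bound] with t ht
  have h0 : p.coeff 0 = 0 := by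
    rw [FormalMultilinearSeries.coeff, hp.coeff_zero]; simp [auxP]
  have h1 : p.coeff 1 = (-((4 * Real.pi / a ^ 2 : ℝ) : ℂ)) := by
    rw [← (auxP_deriv a ha).deriv, hp.deriv]
    rfl
  have h2 : p.partialSum 2 t = -((4 * Real.pi / a ^ 2 : ℝ) : ℂ) * t := by
    simp only [FormalMultilinearSeries.partialSum, Finset.sum_range_succ, Finset.sum_range_zero,
      FormalMultilinearSeries.apply_eq_pow_smul_coeff, h0, h1]
    simp [mul_comm]
  rw [h2, zero_add, norm_pow, norm_norm] at ht
  rwa [neg_mul, sub_neg_eq_add] at ht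

lemma auxP_Q (a : ℝ) (ha : a ≠ 0) : ∀ᶠ t in nhds (0 : ℂ),
    Complex.log (1 - auxP a t) / (4 * Real.pi) - ((1 / a : ℝ) : ℂ) = -(1 / (a + t)) := by
  have ha' : (a : ℂ) ≠ 0 := by exact_mod_cast ha
  have hπ : (Real.pi : ℂ) ≠ 0 := by exact_mod_cast Real.pi_ne_zero
  have h1 := (aux_q_tendsto a ha).eventually (Metric.ball_mem_nhds (0 : ℂ) one_pos)
  have h2 : ∀ᶠ t in nhds (0 : ℂ), (a : ℂ) + t ≠ 0 := by
    apply ContinuousAt.eventually_ne (by fun_prop)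
    simpa using ha
  filter_upwards [h1, h2] with t ht hat
  have h3 := (Complex.abs_im_le_norm _).trans_lt (mem_ball_zero_iff.1 ht)
  rw [abs_lt] at h3
  rw [auxP, sub_sub_cancel, Complex.log_exp (by linarith [Real.pi_gt_three, h3.1])
    (by linarith [Real.pi_gt_three, h3.2])]
  push_cast
  field_simp
  ring

lemma auxP_real (a x : ℝ) : (auxP a x).im = 0 := by
  have : auxP a x = ((1 - Real.exp (4 * Real.pi * x / (a * (a + x))) : ℝ) : ℂ) := by
    unfold auxP; push_cast; rfl
  rw [this, Complex.ofReal_im]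

/-- d = 2, θ₀ = 0, c < 0: for small ε the analytically continued equation
`Log(1−z)/(4π) − 1/a = −1/(a + cε − ε²(Log z/(4π) − i/4 − 1/a))`
(principal logarithms) has a solution `E_ε^r` with `Im E_ε^r < 0`,
`Re(E_ε^r) = 4π|c|ε/a² + O(ε²|ln ε|)` and `Im(E_ε^r) = −πε²/a² + o(ε²)`. -/
theorem resonance_d2_theta0_zero (a c : ℝ)
    (ha : a = 2 * Real.pi / (Real.log 2 - Real.eulerMascheroniConstant))
    (hc : c < 0) :
    ∃ C > (0 : ℝ), ∃ ε₀ > (0 : ℝ), ∃ E : ℝ → ℂ,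
      (∀ ε : ℝ, 0 < ε → ε < ε₀ →
        Complex.log (1 - E ε) / (4 * Real.pi) - ((1 / a : ℝ) : ℂ) =
          -(1 / (((a + c * ε : ℝ) : ℂ) -
            ((ε : ℂ)) ^ 2 *
              (Complex.log (E ε) / (4 * Real.pi) - Complex.I / 4 - ((1 / a : ℝ) : ℂ)))) ∧
        (E ε).im < 0 ∧
        |(E ε).re - 4 * Real.pi * |c| * ε / a ^ 2| ≤ C * ε ^ 2 * |Real.log ε|) ∧
      (∀ δ > (0 : ℝ), ∃ ε₁ > (0 : ℝ), ∀ ε : ℝ, 0 < ε → ε < ε₁ → ε < ε₀ →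
        |(E ε).im + Real.pi * ε ^ 2 / a ^ 2| ≤ δ * ε ^ 2) := by
  have hlg : 0 < Real.log 2 - Real.eulerMascheroniConstant := by
    have h1 := Real.eulerMascheroniConstant_lt_two_thirds
    have h2 := Real.log_two_gt_d9
    norm_num at h2
    linarith
  have ha0 : a ≠ 0 := by
    rw [ha]; have := Real.pi_pos; positivity
  clear ha hlg
  have hπ := Real.pi_pos
  have hκ : 0 < 4 * Real.pi / a ^ 2 := by positivity
  set κ := 4 * Real.pi / a ^ 2 with hκdef
  have hder : HasStrictDerivAt (auxP a) (-(κ : ℂ)) 0 := by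
    rw [← (auxP_deriv a ha0).deriv]
    exact (auxP_analytic a ha0).hasStrictDerivAt
  obtain ⟨M, hM0, hM⟩ := auxP_quad a ha0
  set m : ℂ := -Complex.I / 4 - ((1 / a : ℝ) : ℂ) with hm
  have hmim : m.im = -(1 / 4) := by
    have : m = ((-(1 / 4) : ℝ) : ℂ) * Complex.I - ((1 / a : ℝ) : ℂ) := by
      rw [hm]; push_cast; ring
    rw [this, Complex.sub_im, Complex.ofReal_im, Complex.im_ofReal_mul, Complex.I_im]
    ring
  obtain ⟨C, hC, D, hD, hex⟩ := aux_exists (auxP a) κ c m _ hκ hc hder M hM0 hM (auxP_Q a ha0)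
  have him := aux_im (auxP a) κ c m hκ hc hmim hder (auxP_real a) C D
  have hneg := him (κ / 8) (by positivity)
  obtain ⟨ε₀, hε₀, hall⟩ := mem_nhdsGT_iff_exists_Ioo_subset.1 (hex.and hneg)
  have hex' : ∀ ε : ℝ, ∃ z : ℂ, 0 < ε → ε < ε₀ → _ :=
    fun ε => by
      by_cases h : 0 < ε ∧ ε < ε₀
      · obtain ⟨z, hz⟩ := (hall h).1
        exact ⟨z, fun _ _ => hz⟩
      · exact ⟨0, fun h1 h2 => absurd ⟨h1, h2⟩ h⟩
  choose E hE using hex'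
  refine ⟨C, hC, ε₀, hε₀, E, ?_, ?_⟩
  · intro ε h1 h2
    obtain ⟨hS, hfix, hwD, hQ, hClose⟩ := hE ε h1 h2
    refine ⟨?_, ?_, ?_⟩
    · rw [hfix] at hQ
      rw [hQ]
      congr 3
      rw [auxW, hm]
      push_cast
      ring
    · have h3 := (hall ⟨h1, h2⟩).2 (E ε) hS hfix hwD hClose
      have h4 : 0 < κ * ε ^ 2 := by positivity
      rw [abs_le] at h3
      linarith [h3.2]
    · have h3 := (Complex.abs_re_le_norm _).trans hClose
      rw [Complex.sub_re, Complex.ofReal_re] at h3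
      have h4 : 4 * Real.pi * |c| * ε / a ^ 2 = κ * (-c) * ε := by
        rw [abs_of_neg hc, hκdef]; ring
      rw [h4]; exact h3
  · intro δ hδ
    obtain ⟨ε₁, hε₁, hall1⟩ := mem_nhdsGT_iff_exists_Ioo_subset.1 (him δ hδ)
    refine ⟨ε₁, hε₁, fun ε h1 h2 h3 => ?_⟩
    obtain ⟨hS, hfix, hwD, hQ, hClose⟩ := hE ε h1 h3
    have h4 := hall1 ⟨h1, h2⟩ (E ε) hS hfix hwD hClose
    have h5 : Real.pi * ε ^ 2 / a ^ 2 = κ * ε ^ 2 / 4 := by rw [hκdef]; ring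
    rw [h5]; exact h4
end

section
/- Let a = 2π/(ln 2 − γ), where γ is the Euler–Mascheroni constant, let θ₀ > 0 and c = 0. Then there exist C > 0 and ε₀ > 0 such that for all 0 < ε < ε₀ the equation {a + (aθ₀ − ε²)·(Log z/(4π) − i/4 − 1/a)}·{θ₀ + (aθ₀ − ε²)·(Log(1−z)/(4π) − 1/a)} − ε² = 0, with Log the principal complex logarithm, has a solution E_ε^r with Im(E_ε^r) < 0 satisfying |Re(E_ε^r) − 4πε²/(a²θ₀)| ≤ C·ε²/|ln ε|, and for every δ > 0 there is ε₁ > 0 such that for 0 < ε < ε₁, |Im(E_ε^r) + 4π³ε²/(a²θ₀²(ln ε)²)| ≤ δ·ε²/(ln ε)². -/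
open Complex

open Filter Topology

/-- fixed points depending on a parameter -/
lemma fixed_point_family (Φ : (ℂ × ℂ) × ℂ → ℂ) (w₀ : ℂ)
    (hΦ : AnalyticAt ℂ Φ ((0, 0), w₀)) (h0 : ∀ w, Φ ((0, 0), w) = w₀) :
    ∃ ψ : ℂ × ℂ → ℂ, Tendsto ψ (𝓝 (0, 0)) (𝓝 w₀) ∧
      (∀ᶠ p in 𝓝 ((0, 0) : ℂ × ℂ), Φ (p, ψ p) = ψ p) ∧
      ∃ K : ℝ, 0 < K ∧ ∀ᶠ p in 𝓝 ((0, 0) : ℂ × ℂ), ‖ψ p - w₀‖ ≤ K * ‖p‖ := by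
  set f : (ℂ × ℂ) × ℂ → ℂ := fun v => v.2 - Φ v with hf
  have hfa : AnalyticAt ℂ f ((0, 0), w₀) := analyticAt_snd.sub hΦ
  have dfu := hfa.hasStrictFDerivAt
  have hpart : (fderiv ℂ f ((0, 0), w₀)) ∘L .inr ℂ (ℂ × ℂ) ℂ = .id ℂ ℂ := by
    have h1 : HasFDerivAt (fun w : ℂ => f ((0, 0), w))
        ((fderiv ℂ f ((0, 0), w₀)) ∘L .inr ℂ (ℂ × ℂ) ℂ) w₀ :=
      HasFDerivAt.comp (f := fun w : ℂ => (((0, 0) : ℂ × ℂ), w)) w₀ dfu.hasFDerivAt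
        (hasFDerivAt_prodMk_right (0, 0) w₀)
    have h2 : HasFDerivAt (fun w : ℂ => f ((0, 0), w)) (.id ℂ ℂ) w₀ := by
      simp only [hf, h0]
      exact (hasFDerivAt_id w₀).sub_const w₀
    exact h1.unique h2
  have hinv : ((fderiv ℂ f ((0, 0), w₀)) ∘L .inr ℂ (ℂ × ℂ) ℂ).IsInvertible := by
    rw [hpart]; exact ⟨ContinuousLinearEquiv.refl ℂ ℂ, rfl⟩
  have hfu : f ((0, 0), w₀) = 0 := by simp [hf, h0]
  have ht := dfu.tendsto_implicitFunctionOfProdDomain hinv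
  have he := dfu.eventually_apply_implicitFunctionOfProdDomain hinv
  have hd := (dfu.hasStrictFDerivAt_implicitFunctionOfProdDomain hinv).hasFDerivAt
  refine ⟨dfu.implicitFunctionOfProdDomain hinv, ht, ?_, ?_⟩
  · filter_upwards [he] with p hp
    rw [hfu] at hp
    exact (sub_eq_zero.mp hp).symm
  · obtain ⟨K, hK, hO⟩ := hd.isBigO_sub.exists_pos
    refine ⟨K, hK, ?_⟩
    have h00 : dfu.implicitFunctionOfProdDomain hinv (0, 0) = w₀ :=
      tendsto_nhds_unique hd.continuousAt.tendsto ht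
    filter_upwards [hO.bound] with p hp
    simp only [h00] at hp
    rwa [show p - (0, 0) = p from sub_zero p] at hp

lemma exp_expand : ∃ h h₂ : ℂ → ℂ, AnalyticAt ℂ h 0 ∧ ContinuousAt h₂ 0 ∧ h 0 = 1 ∧
    (∀ u, exp u = 1 + u * h u) ∧ ∀ u, h u = 1 + u * h₂ u := by
  have ha : AnalyticAt ℂ exp 0 := analyticAt_cexp
  obtain ⟨p, hp⟩ := ha
  have h1 := hp.has_fpower_series_dslope_fslope
  have h2 := h1.has_fpower_series_dslope_fslope
  have h0 : dslope exp 0 (0:ℂ) = 1 := by simp [dslope_same]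
  refine ⟨dslope exp 0, dslope (dslope exp 0) 0, ⟨_, h1⟩, h2.continuousAt, h0, ?_, ?_⟩
  · intro u
    have := sub_smul_dslope exp 0 u
    simp at this
    linear_combination -this
  · intro u
    have := sub_smul_dslope (dslope exp 0) 0 u
    rw [h0] at this
    simp at this
    linear_combination -this

lemma a_pos (a : ℝ)
    (ha : a = 2 * Real.pi / (Real.log 2 - Real.eulerMascheroniConstant)) : 0 < a := by
  rw [ha]
  have h1 := Real.eulerMascheroniConstant_lt_two_thirds
  have h2 := Real.log_two_gt_d9
  have h3 := Real.pi_pos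
  apply div_pos (by positivity)
  linarith

noncomputable def DD (a θ : ℝ) (v : (ℂ × ℂ) × ℂ) : ℂ :=
  v.1.1 * (a - θ + v.1.2 / a) +
    (a * θ - v.1.2) * (1 / (2 * Real.pi) + v.1.1 * (log v.2 / (4 * Real.pi) - I / 4))

noncomputable def XX (a θ : ℝ) (v : (ℂ × ℂ) × ℂ) : ℂ :=
  4 * Real.pi / (a * θ - v.1.2) * (v.1.1 / DD a θ v - 1 / a)

lemma DD_zero (a θ : ℝ) (w : ℂ) : DD a θ ((0, 0), w) = a * θ / (2 * Real.pi) := by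
  simp [DD]; ring

lemma XX_zero (a θ : ℝ) (w : ℂ) :
    XX a θ ((0, 0), w) = - (4 * Real.pi / (a ^ 2 * θ) : ℝ) := by
  simp [XX]
  field_simp

lemma DD_an (a θ : ℝ) (w : ℂ) (hw : w ∈ slitPlane) :
    AnalyticAt ℂ (DD a θ) ((0, 0), w) := by
  have h1 : AnalyticAt ℂ (fun v : (ℂ × ℂ) × ℂ => v.1.1) ((0, 0), w) :=
    ((ContinuousLinearMap.fst ℂ ℂ ℂ).comp (ContinuousLinearMap.fst ℂ (ℂ × ℂ) ℂ)).analyticAt _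
  have h2 : AnalyticAt ℂ (fun v : (ℂ × ℂ) × ℂ => v.1.2) ((0, 0), w) :=
    ((ContinuousLinearMap.snd ℂ ℂ ℂ).comp (ContinuousLinearMap.fst ℂ (ℂ × ℂ) ℂ)).analyticAt _
  have h3 : AnalyticAt ℂ (fun v : (ℂ × ℂ) × ℂ => log v.2) ((0, 0), w) :=
    analyticAt_snd.clog hw
  unfold DD
  simp only [div_eq_mul_inv]
  fun_prop

lemma XX_an (a θ : ℝ) (ha : 0 < a) (hθ : 0 < θ) (w : ℂ) (hw : w ∈ slitPlane) :
    AnalyticAt ℂ (XX a θ) ((0, 0), w) := by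
  have h1 : AnalyticAt ℂ (fun v : (ℂ × ℂ) × ℂ => v.1.1) ((0, 0), w) :=
    ((ContinuousLinearMap.fst ℂ ℂ ℂ).comp (ContinuousLinearMap.fst ℂ (ℂ × ℂ) ℂ)).analyticAt _
  have h2 : AnalyticAt ℂ (fun v : (ℂ × ℂ) × ℂ => v.1.2) ((0, 0), w) :=
    ((ContinuousLinearMap.snd ℂ ℂ ℂ).comp (ContinuousLinearMap.fst ℂ (ℂ × ℂ) ℂ)).analyticAt _
  have h3 := DD_an a θ w hw
  have ha' : (a : ℂ) ≠ 0 := by exact_mod_cast ha.ne'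
  have hθ' : (θ : ℂ) ≠ 0 := by exact_mod_cast hθ.ne'
  have hpi : (Real.pi : ℂ) ≠ 0 := by exact_mod_cast Real.pi_pos.ne'
  have h4 : AnalyticAt ℂ (fun v => v.1.1 / DD a θ v) ((0, 0), w) := by
    apply h1.div h3
    rw [DD_zero]
    simp [ha', hθ', hpi]
  have h5 : AnalyticAt ℂ (fun v : (ℂ × ℂ) × ℂ => 4 * (Real.pi : ℂ) / (a * θ - v.1.2))
      ((0, 0), w) := by
    apply analyticAt_const.div (analyticAt_const.sub h2)
    simp [ha', hθ']
  exact h5.mul (h4.sub analyticAt_const)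

/-- algebraic verification of the equation -/
lemma eq_verify (a θ ε s : ℝ) (w : ℂ) (h : ℂ → ℂ) (ha : a ≠ 0) (hε : 0 < ε)
    (hs : s * Real.log ε = 1) (hw : w ≠ 0) (hN : a * θ - ε ^ 2 ≠ 0)
    (hD : DD a θ (((s : ℂ), (ε : ℂ) ^ 2), w) ≠ 0)
    (hexp : ∀ u, exp u = 1 + u * h u)
    (hfix : -XX a θ (((s : ℂ), (ε : ℂ) ^ 2), w) *
      h ((ε : ℂ) ^ 2 * XX a θ (((s : ℂ), (ε : ℂ) ^ 2), w)) = w)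
    (him : |((ε : ℂ) ^ 2 * XX a θ (((s : ℂ), (ε : ℂ) ^ 2), w)).im| < Real.pi) :
    (((a : ℝ) : ℂ) +
            ((a * θ - ε ^ 2 : ℝ) : ℂ) *
              (Complex.log ((ε : ℂ) ^ 2 * w) / (4 * Real.pi) - Complex.I / 4 -
                ((1 / a : ℝ) : ℂ))) *
          ((θ : ℂ) +
            ((a * θ - ε ^ 2 : ℝ) : ℂ) *
              (Complex.log (1 - (ε : ℂ) ^ 2 * w) / (4 * Real.pi) - ((1 / a : ℝ) : ℂ))) -
          ((ε : ℂ)) ^ 2 = 0 := by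
  set X := XX a θ (((s : ℂ), (ε : ℂ) ^ 2), w) with hX
  have hlog1 : log (1 - (ε : ℂ) ^ 2 * w) = (ε : ℂ) ^ 2 * X := by
    have : 1 - (ε : ℂ) ^ 2 * w = exp ((ε : ℂ) ^ 2 * X) := by
      rw [hexp, ← hfix]; ring
    rw [this]
    have := abs_lt.mp him
    exact log_exp this.1 this.2.le
  have hlog2 : log ((ε : ℂ) ^ 2 * w) = 2 * (Real.log ε : ℂ) + log w := by
    have := log_ofReal_mul (r := ε ^ 2) (by positivity) hw
    rw [Real.log_pow] at this
    push_cast at this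
    exact this
  have hpi : (Real.pi : ℂ) ≠ 0 := by exact_mod_cast Real.pi_pos.ne'
  have ha' : (a : ℂ) ≠ 0 := by exact_mod_cast ha
  have hN' : (a : ℂ) * θ - (ε : ℂ) ^ 2 ≠ 0 := by exact_mod_cast hN
  have hs' : (s : ℂ) * (Real.log ε : ℂ) = 1 := by exact_mod_cast hs
  have hs0 : (s : ℂ) ≠ 0 := left_ne_zero_of_mul_eq_one hs'
  have hl : (Real.log ε : ℂ) = 1 / s := by field_simp; linear_combination hs'
  rw [hlog1, hlog2, hl]
  have hXe : X = 4 * Real.pi / (a * θ - (ε : ℂ) ^ 2) *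
    (s / DD a θ (((s : ℂ), (ε : ℂ) ^ 2), w) - 1 / a) := rfl
  have f1 : (((a : ℝ) : ℂ) + ((a * θ - ε ^ 2 : ℝ) : ℂ) *
              ((2 * (1 / (s : ℂ)) + log w) / (4 * Real.pi) - Complex.I / 4 -
                ((1 / a : ℝ) : ℂ))) = DD a θ (((s : ℂ), (ε : ℂ) ^ 2), w) / s := by
    simp only [DD]
    push_cast
    field_simp
    ring
  have f2 : ((θ : ℂ) + ((a * θ - ε ^ 2 : ℝ) : ℂ) *
              ((ε : ℂ) ^ 2 * X / (4 * Real.pi) - ((1 / a : ℝ) : ℂ))) =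
      (ε : ℂ) ^ 2 * s / DD a θ (((s : ℂ), (ε : ℂ) ^ 2), w) := by
    rw [hXe]
    push_cast
    obtain ⟨N, hNd⟩ : ∃ N : ℂ, N = a * θ - (ε : ℂ) ^ 2 := ⟨_, rfl⟩
    have hθN : (θ : ℂ) = (N + (ε : ℂ) ^ 2) / a := by rw [hNd]; field_simp; ring
    rw [← hNd] at hN' ⊢
    generalize DD a θ (((s : ℂ), (ε : ℂ) ^ 2), w) = D at hD ⊢
    rw [hθN]
    field_simp
    ring
  rw [f1, f2]
  field_simp
  ring

lemma im_XX (a θ s t : ℝ) (w : ℂ) (hN : a * θ - t ≠ 0) :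
    (XX a θ (((s : ℂ), (t : ℂ)), w)).im =
      - (4 * Real.pi * (arg w / (4 * Real.pi) - 1 / 4) /
        normSq (DD a θ (((s : ℂ), (t : ℂ)), w))) * s ^ 2 := by
  have hDim : (DD a θ (((s : ℂ), (t : ℂ)), w)).im =
      (a * θ - t) * (s * (arg w / (4 * Real.pi) - 1 / 4)) := by
    have : DD a θ (((s : ℂ), (t : ℂ)), w) = ((s * (a - θ + t / a) : ℝ) : ℂ) +
      ((a * θ - t : ℝ) : ℂ) * (((1 / (2 * Real.pi) : ℝ) : ℂ) + (s : ℂ) *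
        ((((1 / (4 * Real.pi) : ℝ) : ℂ)) * log w - ((1 / 4 : ℝ) : ℂ) * I)) := by
      simp only [DD]; push_cast; ring
    rw [this]
    simp only [add_im, ofReal_im, im_ofReal_mul, sub_im, log_im, I_im]
    ring
  have : XX a θ (((s : ℂ), (t : ℂ)), w) = ((4 * Real.pi / (a * θ - t) : ℝ) : ℂ) *
      ((s : ℂ) * (DD a θ (((s : ℂ), (t : ℂ)), w))⁻¹ - ((1 / a : ℝ) : ℂ)) := by
    simp only [XX]; push_cast; ring
  rw [this]
  simp only [im_ofReal_mul, sub_im, ofReal_im, inv_im, hDim]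
  field_simp
  ring

/-- d = 2, c = 0, θ₀ > 0: for small ε the analytically continued resolvent
denominator (principal logarithms) has a zero `E_ε^r` with `Im E_ε^r < 0`,
`Re(E_ε^r) = 4πε²/(a²θ₀) + O(ε²/|ln ε|)` and
`Im(E_ε^r) = −4π³ε²/(a²θ₀²(ln ε)²) + o(ε²/(ln ε)²)`. -/
theorem resonance_d2_offdiagonal (a θ₀ : ℝ)
    (ha : a = 2 * Real.pi / (Real.log 2 - Real.eulerMascheroniConstant))
    (hθ : 0 < θ₀) :
    ∃ C > (0 : ℝ), ∃ ε₀ > (0 : ℝ), ∃ E : ℝ → ℂ,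
      (∀ ε : ℝ, 0 < ε → ε < ε₀ →
        (((a : ℝ) : ℂ) +
            ((a * θ₀ - ε ^ 2 : ℝ) : ℂ) *
              (Complex.log (E ε) / (4 * Real.pi) - Complex.I / 4 - ((1 / a : ℝ) : ℂ))) *
          ((θ₀ : ℂ) +
            ((a * θ₀ - ε ^ 2 : ℝ) : ℂ) *
              (Complex.log (1 - E ε) / (4 * Real.pi) - ((1 / a : ℝ) : ℂ))) -
          ((ε : ℂ)) ^ 2 = 0 ∧
        (E ε).im < 0 ∧
        |(E ε).re - 4 * Real.pi * ε ^ 2 / (a ^ 2 * θ₀)| ≤ C * ε ^ 2 / |Real.log ε|) ∧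
      (∀ δ > (0 : ℝ), ∃ ε₁ > (0 : ℝ), ∀ ε : ℝ, 0 < ε → ε < ε₁ → ε < ε₀ →
        |(E ε).im + 4 * Real.pi ^ 3 * ε ^ 2 / (a ^ 2 * θ₀ ^ 2 * (Real.log ε) ^ 2)| ≤
          δ * ε ^ 2 / (Real.log ε) ^ 2) := by
  have hapos := a_pos a ha
  clear ha
  obtain ⟨h, h₂, han, hh2c, hh0, hexp, hh2⟩ := exp_expand
  obtain ⟨w₀, hw₀⟩ : ∃ w₀ : ℝ, w₀ = 4 * Real.pi / (a ^ 2 * θ₀) := ⟨_, rfl⟩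
  have hpi := Real.pi_pos
  have hw₀pos : 0 < w₀ := by rw [hw₀]; positivity
  have hslit : (w₀ : ℂ) ∈ slitPlane := ofReal_mem_slitPlane.mpr hw₀pos
  have hDa := DD_an a θ₀ w₀ hslit
  have hXa := XX_an a θ₀ hapos hθ w₀ hslit
  have h12 : AnalyticAt ℂ (fun v : (ℂ × ℂ) × ℂ => v.1.2) ((0, 0), (w₀ : ℂ)) :=
    ((ContinuousLinearMap.snd ℂ ℂ ℂ).comp (ContinuousLinearMap.fst ℂ (ℂ × ℂ) ℂ)).analyticAt _
  have hΦ : AnalyticAt ℂ (fun v : (ℂ × ℂ) × ℂ => -XX a θ₀ v * h (v.1.2 * XX a θ₀ v))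
      ((0, 0), (w₀ : ℂ)) := by
    apply hXa.neg.mul
    apply AnalyticAt.fun_comp (g := h) _ (h12.mul hXa)
    simpa using han
  obtain ⟨ψ, hψt, hψfix, K, hK, hψK⟩ := fixed_point_family _ (w₀ : ℂ) hΦ (by
    intro w
    simp [XX_zero, hh0, hw₀])
  -- filters
  have hlogt : Tendsto Real.log (𝓝[>] 0) atBot := Real.tendsto_log_nhdsGT_zero
  have hst : Tendsto (fun ε : ℝ => (Real.log ε)⁻¹) (𝓝[>] 0) (𝓝 0) :=
    tendsto_inv_atBot_zero.comp hlogt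
  have hεt : Tendsto (fun ε : ℝ => ε) (𝓝[>] 0) (𝓝 0) := tendsto_nhdsWithin_of_tendsto_nhds tendsto_id
  have htt : Tendsto (fun ε : ℝ => ε ^ 2) (𝓝[>] 0) (𝓝 0) := by simpa using hεt.pow 2
  have hxl : Tendsto (fun ε : ℝ => ε * Real.log ε) (𝓝[>] 0) (𝓝 0) := by
    have := Real.continuous_mul_log.tendsto 0
    simp only [zero_mul] at this
    exact this.mono_left nhdsWithin_le_nhds
  have htl2 : Tendsto (fun ε : ℝ => ε ^ 2 * Real.log ε ^ 2) (𝓝[>] 0) (𝓝 0) := by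
    simpa [mul_pow] using hxl.pow 2
  obtain ⟨p, hp⟩ : ∃ p : ℝ → ℂ × ℂ, p = fun ε => ((((Real.log ε)⁻¹ : ℝ) : ℂ), ((ε ^ 2 : ℝ) : ℂ)) :=
    ⟨_, rfl⟩
  have hpt : Tendsto p (𝓝[>] 0) (𝓝 (0, 0)) := by
    rw [hp]
    exact ((continuous_ofReal.tendsto' 0 0 (by simp)).comp hst).prodMk_nhds
      ((continuous_ofReal.tendsto' 0 0 (by simp)).comp htt)
  have hwt : Tendsto (fun ε => ψ (p ε)) (𝓝[>] 0) (𝓝 (w₀ : ℂ)) := hψt.comp hpt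
  have hvt : Tendsto (fun ε => (p ε, ψ (p ε))) (𝓝[>] 0) (𝓝 ((0, 0), (w₀ : ℂ))) :=
    hpt.prodMk_nhds hwt
  have hDt : Tendsto (fun ε => DD a θ₀ (p ε, ψ (p ε))) (𝓝[>] 0)
      (𝓝 ((a * θ₀ / (2 * Real.pi) : ℝ) : ℂ)) := by
    have := hDa.continuousAt.tendsto.comp hvt
    rw [DD_zero] at this
    push_cast
    exact this
  have hXt : Tendsto (fun ε => XX a θ₀ (p ε, ψ (p ε))) (𝓝[>] 0) (𝓝 (-(w₀ : ℂ))) := by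
    have := hXa.continuousAt.tendsto.comp hvt
    rw [XX_zero, ← hw₀] at this
    exact this
  have htXt : Tendsto (fun ε : ℝ => ((ε ^ 2 : ℝ) : ℂ) * XX a θ₀ (p ε, ψ (p ε))) (𝓝[>] 0) (𝓝 0) := by
    have := ((continuous_ofReal.tendsto' 0 0 (by simp)).comp htt).mul hXt
    simpa using this
  have hDpos : 0 < a * θ₀ / (2 * Real.pi) := by positivity
  have ev_D : ∀ᶠ ε in 𝓝[>] (0 : ℝ), DD a θ₀ (p ε, ψ (p ε)) ≠ 0 :=
    hDt.eventually_ne (by exact_mod_cast hDpos.ne')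
  have ev_w : ∀ᶠ ε in 𝓝[>] (0 : ℝ), ψ (p ε) ≠ 0 :=
    hwt.eventually_ne (by exact_mod_cast hw₀pos.ne')
  have ev_N : ∀ᶠ ε in 𝓝[>] (0 : ℝ), a * θ₀ - ε ^ 2 ≠ 0 := by
    have : Tendsto (fun ε : ℝ => a * θ₀ - ε ^ 2) (𝓝[>] 0) (𝓝 (a * θ₀ - 0)) :=
      tendsto_const_nhds.sub htt
    apply this.eventually_ne
    rw [sub_zero]; positivity
  have ev_im : ∀ᶠ ε in 𝓝[>] (0 : ℝ),
      |(((ε ^ 2 : ℝ) : ℂ) * XX a θ₀ (p ε, ψ (p ε))).im| < Real.pi := by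
    have := (continuous_im.tendsto 0).comp htXt
    have h3 := this.abs
    simp only [zero_im, abs_zero] at h3
    exact h3.eventually_lt_const hpi
  have ev_pos : ∀ᶠ ε in 𝓝[>] (0 : ℝ), 0 < ε := eventually_mem_nhdsWithin
  have ev_log : ∀ᶠ ε in 𝓝[>] (0 : ℝ), Real.log ε < 0 := hlogt.eventually_lt_atBot 0
  have ev_fix := hpt.eventually hψfix
  have ev_K := hpt.eventually hψK
  have ev_xl : ∀ᶠ ε in 𝓝[>] (0 : ℝ), |ε * Real.log ε| < 1 := by
    have h3 := hxl.abs
    simp only [abs_zero] at h3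
    exact h3.eventually_lt_const one_pos
  have ev_one : ∀ᶠ ε in 𝓝[>] (0 : ℝ), ε < 1 := hεt.eventually_lt_const one_pos
  -- imaginary part limit
  have himlim : Tendsto (fun ε => (ψ (p ε)).im * Real.log ε ^ 2) (𝓝[>] 0)
      (𝓝 (-(4 * Real.pi ^ 3 / (a ^ 2 * θ₀ ^ 2)))) := by
    have hA : Tendsto (fun ε => 4 * Real.pi * (arg (ψ (p ε)) / (4 * Real.pi) - 1 / 4) /
        normSq (DD a θ₀ (p ε, ψ (p ε)))) (𝓝[>] 0)
        (𝓝 (4 * Real.pi * (arg (w₀ : ℂ) / (4 * Real.pi) - 1 / 4) /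
          normSq ((a * θ₀ / (2 * Real.pi) : ℝ) : ℂ))) := by
      refine Tendsto.div ?_ ((continuous_normSq.tendsto _).comp hDt) ?_
      · exact ((((continuousAt_arg hslit).tendsto.comp hwt).div_const _).sub_const _).const_mul _
      · rw [normSq_ofReal]; positivity
    have hB : Tendsto (fun ε => ((((ε ^ 2 * Real.log ε ^ 2 : ℝ) : ℂ)) *
        (XX a θ₀ (p ε, ψ (p ε)) ^ 2 *
          h₂ (((ε ^ 2 : ℝ) : ℂ) * XX a θ₀ (p ε, ψ (p ε))))).im) (𝓝[>] 0) (𝓝 0) := by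
      have h3 := ((continuous_ofReal.tendsto' 0 0 (by simp)).comp htl2).mul
        ((hXt.pow 2).mul (hh2c.tendsto.comp htXt))
      have h4 := (continuous_im.tendsto _).comp h3
      simpa [Function.comp_def] using h4
    have hAB := hA.sub hB
    rw [arg_ofReal_of_nonneg hw₀pos.le, normSq_ofReal] at hAB
    have hval : 4 * Real.pi * (0 / (4 * Real.pi) - 1 / 4) /
        (a * θ₀ / (2 * Real.pi) * (a * θ₀ / (2 * Real.pi))) - 0 =
        -(4 * Real.pi ^ 3 / (a ^ 2 * θ₀ ^ 2)) := by
      field_simp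
      ring
    rw [hval] at hAB
    refine hAB.congr' ?_
    filter_upwards [ev_N, ev_log, ev_fix] with ε hN hl hfix
    have hX := im_XX a θ₀ (Real.log ε)⁻¹ (ε ^ 2) (ψ (p ε)) hN
    have hpe : p ε = ((((Real.log ε)⁻¹ : ℝ) : ℂ), ((ε ^ 2 : ℝ) : ℂ)) := by rw [hp]
    rw [← hpe] at hX
    have hw : ψ (p ε) = -XX a θ₀ (p ε, ψ (p ε)) - ((ε ^ 2 : ℝ) : ℂ) *
        (XX a θ₀ (p ε, ψ (p ε)) ^ 2 *
          h₂ (((ε ^ 2 : ℝ) : ℂ) * XX a θ₀ (p ε, ψ (p ε)))) := by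
      have h22 : (p ε).2 = ((ε ^ 2 : ℝ) : ℂ) := by rw [hpe]
      simp only [hh2, h22] at hfix
      linear_combination -hfix
    have hwim := congrArg Complex.im hw
    rw [sub_im, neg_im, im_ofReal_mul, hX] at hwim
    rw [hwim, im_ofReal_mul]
    have hll : (Real.log ε)⁻¹ ^ 2 * Real.log ε ^ 2 = 1 := by
      rw [← mul_pow, inv_mul_cancel₀ hl.ne, one_pow]
    linear_combination (-(4 * Real.pi * ((ψ (p ε)).arg / (4 * Real.pi) - 1 / 4) /
      normSq (DD a θ₀ (p ε, ψ (p ε))))) * hll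
  have ev_neg : ∀ᶠ ε in 𝓝[>] (0 : ℝ), (ψ (p ε)).im * Real.log ε ^ 2 < 0 := by
    apply himlim.eventually_lt_const
    rw [neg_lt_zero]; positivity
  have ev_all := ev_D.and (ev_w.and (ev_N.and (ev_im.and (ev_log.and (ev_fix.and
    (ev_K.and (ev_xl.and (ev_one.and ev_neg))))))))
  obtain ⟨ε₀, hε₀, hsub⟩ := mem_nhdsGT_iff_exists_Ioo_subset.mp ev_all
  refine ⟨K, hK, ε₀, hε₀, fun ε => (ε : ℂ) ^ 2 * ψ (p ε), ?_, ?_⟩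
  · intro ε hε hlt
    obtain ⟨hD, hw, hN, him, hl, hfix, hKb, hx, h1, hneg⟩ := hsub ⟨hε, hlt⟩
    have hpe : p ε = ((((Real.log ε)⁻¹ : ℝ) : ℂ), (ε : ℂ) ^ 2) := by rw [hp]; push_cast; rfl
    have hnorm : ‖p ε‖ ≤ |Real.log ε|⁻¹ := by
      rw [hpe, Prod.norm_mk]
      apply max_le
      · simp
      · simp only [norm_pow, norm_real, Real.norm_eq_abs]
        rw [le_inv_comm₀ (by positivity) (abs_pos.mpr hl.ne)]
        rw [abs_mul] at hx
        rw [abs_of_pos hε] at hx ⊢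
        rw [le_inv_comm₀ (abs_pos.mpr hl.ne) (by positivity)]
        rw [le_inv_comm₀ (by positivity) (abs_pos.mpr hl.ne)]
        rw [← one_div, le_div_iff₀ (by positivity)]
        nlinarith [abs_nonneg (Real.log ε)]
    refine ⟨?_, ?_, ?_⟩
    · beta_reduce
      generalize ψ (p ε) = w at *
      rw [hpe] at hD hfix him
      rw [ofReal_pow] at him
      exact eq_verify a θ₀ ε (Real.log ε)⁻¹ w h hapos.ne' hε (inv_mul_cancel₀ hl.ne) hw hN hD
        hexp hfix him
    · have : ((ε : ℂ) ^ 2 * ψ (p ε)).im = ε ^ 2 * (ψ (p ε)).im := by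
        rw [← ofReal_pow, im_ofReal_mul]
      rw [this]
      have h2 : 0 < Real.log ε ^ 2 := by have := hl.ne; positivity
      have h3 : (ψ (p ε)).im < 0 := by
        by_contra hc
        push Not at hc
        have := mul_nonneg hc h2.le
        linarith
      exact mul_neg_of_pos_of_neg (by positivity) h3
    · have : ((ε : ℂ) ^ 2 * ψ (p ε)).re = ε ^ 2 * (ψ (p ε)).re := by
        rw [← ofReal_pow, re_ofReal_mul]
      rw [this, show ε ^ 2 * (ψ (p ε)).re - 4 * Real.pi * ε ^ 2 / (a ^ 2 * θ₀) =
        ε ^ 2 * (ψ (p ε) - w₀).re by rw [sub_re, ofReal_re, hw₀]; ring]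
      rw [abs_mul, abs_of_pos (by positivity : 0 < ε ^ 2)]
      calc ε ^ 2 * |(ψ (p ε) - w₀).re| ≤ ε ^ 2 * (K * |Real.log ε|⁻¹) := by
            gcongr
            exact (abs_re_le_norm _).trans (hKb.trans (by gcongr))
        _ = _ := by ring
  · intro δ hδ
    have hev := (Metric.tendsto_nhds.mp himlim) δ hδ
    obtain ⟨ε₁, hε₁, hsub1⟩ := mem_nhdsGT_iff_exists_Ioo_subset.mp (hev.and ev_log)
    refine ⟨ε₁, hε₁, fun ε hε hlt _ => ?_⟩
    obtain ⟨hd, hl⟩ := hsub1 ⟨hε, hlt⟩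
    rw [Real.dist_eq] at hd
    have : ((ε : ℂ) ^ 2 * ψ (p ε)).im = ε ^ 2 * (ψ (p ε)).im := by
      rw [← ofReal_pow, im_ofReal_mul]
    simp only [this]
    have hl0 := hl.ne
    have heq : ε ^ 2 * (ψ (p ε)).im +
        4 * Real.pi ^ 3 * ε ^ 2 / (a ^ 2 * θ₀ ^ 2 * Real.log ε ^ 2) =
        ((ψ (p ε)).im * Real.log ε ^ 2 - -(4 * Real.pi ^ 3 / (a ^ 2 * θ₀ ^ 2))) *
          (ε ^ 2 / Real.log ε ^ 2) := by
      field_simp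
      ring
    rw [heq, abs_mul, abs_of_nonneg (by positivity : 0 ≤ ε ^ 2 / Real.log ε ^ 2),
      mul_div_assoc δ]
    exact mul_le_mul_of_nonneg_right hd.le (by positivity)
end
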